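/- There exists a constant C > 0, depending only on n, κ0, κ1 and C₀, such that for every harmonic function u on Ω₁ with boundary values φ on Γ₁⁺ and ψ on Γ₁⁻, the function w := u − ũ satisfies the global energy estimate ∫_{Ω_{1/2}} |∇w|² dx ≤ C·(∫_{Ω₁} |w|² dx + ‖φ‖²_{C²} + ‖ψ‖²_{C²}). -/

import Mathlib

/-!
Write `w = u - ũ`, which vanishes on `Γ₁⁺ ∪ Γ₁⁻`. Since `ũ` is affine in `x_n`, its vertical
derivative `(φ - ψ)/δ` depends on `x'` only, so the field with horizontal components `∂_α u` and
vertical component `∂_n w` is still divergence free in `Ω₁`, and it differs from `∇w` only by the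
horizontal gradient `∇'ũ`. Testing it with `χ² w`, where `χ` is a cutoff in `x'`, gives the
Caccioppoli inequality `∫ χ² |∇w|² ≲ ∫ |∇χ|² w² + ∫ χ² |∇'ũ|²`.

No regularity of `u` at the boundary is needed for this. In the test function `w` is replaced by
`G_τ(w)` with `G_τ` a `C¹` truncation vanishing on `[-τ, τ]`, so that `χ² G_τ(w)` has compact
support in `Ω₁`. The inequality `|G_τ(s)| ≤ G_τ'(s) |s|` keeps every error term under the weight
`G_τ'(w)`, and as `τ → 0` the weight tends to the indicator of `{w ≠ 0}`, while `∇w = 0` almost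
everywhere on `{w = 0}`.

Finally, `∇h₁` and `∇h₂` are `O(|x'|) = O(δ^{1/2})`, whence `|∇'ũ|² ≲ (‖φ‖ + ‖ψ‖)² / δ`, and the
fibre of `Ω₁` over `x'` has length `δ(x')`, so that `∫_{Ω₁} 1/δ` is the volume of the unit ball of
`ℝ^{n-1}`, independently of `ε`.
-/

open MeasureTheory Metric Finset

noncomputable section

/-- `ℝ^{n-1}`, the horizontal (tangential) variables `x'`. -/
abbrev Ep (n : ℕ) := EuclideanSpace ℝ (Fin (n - 1))

/-- `ℝ^n = ℝ^{n-1} × ℝ`, points written `x = (x', x_n)`. -/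
abbrev Efull (n : ℕ) := Ep n × ℝ

/-- The narrow region `Ω_r`. -/
def Omega (n : ℕ) (ε : ℝ) (h1 h2 : Ep n → ℝ) (r : ℝ) : Set (Efull n) :=
  {x | ‖x.1‖ < r ∧ -ε/2 + h2 x.1 < x.2 ∧ x.2 < ε/2 + h1 x.1}

/-- Top boundary `Γ_r⁺`. -/
def Gammap (n : ℕ) (ε : ℝ) (h1 : Ep n → ℝ) (r : ℝ) : Set (Efull n) :=
  {x | ‖x.1‖ ≤ r ∧ x.2 = ε/2 + h1 x.1}

/-- Bottom boundary `Γ_r⁻`. -/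
def Gammam (n : ℕ) (ε : ℝ) (h2 : Ep n → ℝ) (r : ℝ) : Set (Efull n) :=
  {x | ‖x.1‖ ≤ r ∧ x.2 = -ε/2 + h2 x.1}

/-- `Ω̂_s(x₀) = {x ∈ Ω_{1/2} : |x' - x₀'| < s}`. -/
def OmegaHat (n : ℕ) (ε : ℝ) (h1 h2 : Ep n → ℝ) (x0 : Efull n) (s : ℝ) : Set (Efull n) :=
  {x | x ∈ Omega n ε h1 h2 (1/2) ∧ ‖x.1 - x0.1‖ < s}

/-- The `n` coordinate directions of `ℝ^{n-1} × ℝ`: the first `n-1` are the horizontal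
Euclidean basis vectors, the last is the vertical direction. -/
def dir (n : ℕ) (α : Fin n) : Efull n :=
  if h : (α : ℕ) < n - 1 then (EuclideanSpace.single (⟨(α : ℕ), h⟩ : Fin (n - 1)) 1, (0:ℝ))
  else (0, 1)

/-- Tangential direction `e_α` for `α ∈ {1, …, n-1}`. -/
def tang (n : ℕ) (α : Fin (n - 1)) : Efull n := (EuclideanSpace.single α 1, (0:ℝ))

/-- Vertical direction `e_n`. -/
def vert (n : ℕ) : Efull n := (0, 1)

/-- Pointwise Laplacian `Δu = Σ_α ∂_α∂_α u`. -/
def lapl (n : ℕ) (u : Efull n → ℝ) (x : Efull n) : ℝ :=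
  ∑ α : Fin n, fderiv ℝ (fun y => fderiv ℝ u y (dir n α)) x (dir n α)

/-- The auxiliary function `ū(x', x_n) = (x_n - h2(x') + ε/2)/(ε + h1(x') - h2(x'))`. -/
def ubar (n : ℕ) (ε : ℝ) (h1 h2 : Ep n → ℝ) (x : Efull n) : ℝ :=
  (x.2 - h2 x.1 + ε/2) / (ε + h1 x.1 - h2 x.1)

/-- The auxiliary function `ũ = φ(x')·ū + ψ(x')·(1 - ū)`. -/
def util (n : ℕ) (ε : ℝ) (h1 h2 φ ψ : Ep n → ℝ) (x : Efull n) : ℝ :=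
  φ x.1 * ubar n ε h1 h2 x + ψ x.1 * (1 - ubar n ε h1 h2 x)

/-- `C²`-norm on the closed unit ball: `sup_{|x'| ≤ 1} (|f| + |∇f| + |∇²f|)`. -/
def C2norm {F : Type*} [NormedAddCommGroup F] [NormedSpace ℝ F] (n : ℕ)
    (f : Ep n → F) : ℝ :=
  ⨆ y : closedBall (0 : Ep n) 1,
    (‖f (y : Ep n)‖ + ‖fderiv ℝ f (y : Ep n)‖ + ‖fderiv ℝ (fderiv ℝ f) (y : Ep n)‖)

/-- `C²(S)`-norm of a function on `ℝ^n`. -/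
def C2normOn (n : ℕ) (S : Set (Efull n)) (f : Efull n → ℝ) : ℝ :=
  ⨆ y : S,
    (‖f (y : Efull n)‖ + ‖fderiv ℝ f (y : Efull n)‖ + ‖fderiv ℝ (fderiv ℝ f) (y : Efull n)‖)

/-- `‖∇f‖_∞ = sup_{|x'| ≤ 1} |∇f(x')|`. -/
def gradSup {F : Type*} [NormedAddCommGroup F] [NormedSpace ℝ F] (n : ℕ) (f : Ep n → F) : ℝ :=
  ⨆ y : closedBall (0 : Ep n) 1, ‖fderiv ℝ f (y : Ep n)‖

/-- `‖∇²f‖_∞ = sup_{|x'| ≤ 1} |∇²f(x')|`. -/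
def hessSup {F : Type*} [NormedAddCommGroup F] [NormedSpace ℝ F] (n : ℕ) (f : Ep n → F) : ℝ :=
  ⨆ y : closedBall (0 : Ep n) 1, ‖fderiv ℝ (fderiv ℝ f) (y : Ep n)‖

/-- The geometric hypotheses on `h1, h2`: `C²` on the closed unit ball, the two graphs
do not touch, flatness at the origin, strict convexity of the gap, and `C²`-bound `κ1`. -/
def HGeom (n : ℕ) (ε κ0 κ1 : ℝ) (h1 h2 : Ep n → ℝ) : Prop :=
  ContDiffOn ℝ 2 h1 (closedBall 0 1) ∧ ContDiffOn ℝ 2 h2 (closedBall 0 1) ∧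
  (∀ y : Ep n, ‖y‖ ≤ 1 → -ε/2 + h2 y < ε/2 + h1 y) ∧
  h1 0 = 0 ∧ h2 0 = 0 ∧ fderiv ℝ h1 0 = 0 ∧ fderiv ℝ h2 0 = 0 ∧
  (∀ v : Ep n, κ0 * ‖v‖^2 ≤ fderiv ℝ (fderiv ℝ (fun y => h1 y - h2 y)) 0 v v) ∧
  C2norm n h1 + C2norm n h2 ≤ κ1

/-- Comparability `(ε + |x'|²)/C₀ ≤ δ(x') ≤ C₀ (ε + |x'|²)`. -/
def DeltaComp (n : ℕ) (ε C₀ : ℝ) (h1 h2 : Ep n → ℝ) : Prop :=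
  ∀ y : Ep n, ‖y‖ ≤ 1 →
    (ε + ‖y‖^2) / C₀ ≤ ε + h1 y - h2 y ∧ ε + h1 y - h2 y ≤ C₀ * (ε + ‖y‖^2)

/-- Hypotheses on the coefficients: `C²`-regularity with total `C²(Ω₁)`-norm at most `κ2`,
boundedness `|A| ≤ Λ`, and the weak ellipticity (Legendre) condition with constant `λ`. -/
def CoeffHyp (n N : ℕ) (ε lam Lam κ2 : ℝ) (h1 h2 : Ep n → ℝ)
    (A : Fin n → Fin n → Fin N → Fin N → Efull n → ℝ)
    (B : Fin n → Fin N → Fin N → Efull n → ℝ)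
    (Cc : Fin n → Fin N → Fin N → Efull n → ℝ)
    (Dc : Fin N → Fin N → Efull n → ℝ) : Prop :=
  (∀ α β i j, ContDiffOn ℝ 2 (A α β i j) (Omega n ε h1 h2 1)) ∧
  (∀ α i j, ContDiffOn ℝ 2 (B α i j) (Omega n ε h1 h2 1)) ∧
  (∀ β i j, ContDiffOn ℝ 2 (Cc β i j) (Omega n ε h1 h2 1)) ∧
  (∀ i j, ContDiffOn ℝ 2 (Dc i j) (Omega n ε h1 h2 1)) ∧
  ((∑ α : Fin n, ∑ β : Fin n, ∑ i : Fin N, ∑ j : Fin N,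
      C2normOn n (Omega n ε h1 h2 1) (A α β i j)) +
   (∑ α : Fin n, ∑ i : Fin N, ∑ j : Fin N, C2normOn n (Omega n ε h1 h2 1) (B α i j)) +
   (∑ β : Fin n, ∑ i : Fin N, ∑ j : Fin N, C2normOn n (Omega n ε h1 h2 1) (Cc β i j)) +
   (∑ i : Fin N, ∑ j : Fin N, C2normOn n (Omega n ε h1 h2 1) (Dc i j)) ≤ κ2) ∧
  (∀ α β i j, ∀ x ∈ Omega n ε h1 h2 1, |A α β i j x| ≤ Lam) ∧
  (∀ ξ : Efull n → EuclideanSpace ℝ (Fin N), ContDiff ℝ (⊤ : ℕ∞) ξ →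
    HasCompactSupport ξ → tsupport ξ ⊆ Omega n ε h1 h2 1 →
    lam * ∫ x in Omega n ε h1 h2 1, ‖fderiv ℝ ξ x‖^2 ≤
      ∫ x in Omega n ε h1 h2 1,
        ∑ α : Fin n, ∑ β : Fin n, ∑ i : Fin N, ∑ j : Fin N,
          A α β i j x * fderiv ℝ ξ x (dir n α) i * fderiv ℝ ξ x (dir n β) j)

/-- `u` is a weak solution of
`∂_α(A^{αβ}_{ij} ∂_β u^j + B^α_{ij} u^j) + C^β_{ij} ∂_β u^j + D_{ij} u^j = 0` in `Ω₁`. -/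
def WeakSol (n N : ℕ) (ε : ℝ) (h1 h2 : Ep n → ℝ)
    (A : Fin n → Fin n → Fin N → Fin N → Efull n → ℝ)
    (B : Fin n → Fin N → Fin N → Efull n → ℝ)
    (Cc : Fin n → Fin N → Fin N → Efull n → ℝ)
    (Dc : Fin N → Fin N → Efull n → ℝ)
    (u : Efull n → EuclideanSpace ℝ (Fin N)) : Prop :=
  ContDiffOn ℝ 1 u (Omega n ε h1 h2 1) ∧
  IntegrableOn (fun x => ‖u x‖^2 + ‖fderiv ℝ u x‖^2) (Omega n ε h1 h2 1) ∧
  ∀ ζ : Efull n → EuclideanSpace ℝ (Fin N), ContDiff ℝ (⊤ : ℕ∞) ζ →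
    HasCompactSupport ζ → tsupport ζ ⊆ Omega n ε h1 h2 1 →
    (∫ x in Omega n ε h1 h2 1,
      ((∑ α : Fin n, ∑ i : Fin N,
          ((∑ β : Fin n, ∑ j : Fin N, A α β i j x * fderiv ℝ u x (dir n β) j) +
            ∑ j : Fin N, B α i j x * u x j) * fderiv ℝ ζ x (dir n α) i) -
        ∑ i : Fin N,
          ((∑ β : Fin n, ∑ j : Fin N, Cc β i j x * fderiv ℝ u x (dir n β) j) +
            ∑ j : Fin N, Dc i j x * u x j) * ζ x i)) = 0

/-- `u` attains the boundary values `(φ, ψ)` on `Γ₁⁺` and `Γ₁⁻`. -/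
def AttainsBV {F : Type*} [NormedAddCommGroup F] [NormedSpace ℝ F] (n : ℕ) (ε : ℝ)
    (h1 h2 : Ep n → ℝ) (u : Efull n → F) (φ ψ : Ep n → F) : Prop :=
  ContinuousOn u (Omega n ε h1 h2 1 ∪ Gammap n ε h1 1 ∪ Gammam n ε h2 1) ∧
  (∀ y : Ep n, ‖y‖ ≤ 1 → u (y, ε/2 + h1 y) = φ y ∧ u (y, -ε/2 + h2 y) = ψ y)

/-- `u` is a harmonic function on `Ω₁` with boundary values `φ` on `Γ₁⁺` and `ψ` on `Γ₁⁻`. -/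
def HarmBV (n : ℕ) (ε : ℝ) (h1 h2 : Ep n → ℝ) (u : Efull n → ℝ) (φ ψ : Ep n → ℝ) : Prop :=
  ContDiffOn ℝ 2 u (Omega n ε h1 h2 1) ∧
  (∀ x ∈ Omega n ε h1 h2 1, lapl n u x = 0) ∧
  IntegrableOn (fun x => ‖u x‖^2 + ‖fderiv ℝ u x‖^2) (Omega n ε h1 h2 1) ∧
  AttainsBV n ε h1 h2 u φ ψ

section Truncation

variable {τ r s : ℝ}

/-- The derivative of the truncation `trunc τ`: a continuous weight with values in `[0, 1]`, equal
to `0` for `|s| ≤ τ` and to `1` for `|s| ≥ 2τ`. -/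
def truncWeight (τ s : ℝ) : ℝ := max 0 (min 1 (|s| / τ - 1))

/-- A `C¹` truncation of the identity that vanishes on `[-τ, τ]` and has slope `1` off
`[-2τ, 2τ]`. -/
def trunc (τ s : ℝ) : ℝ := ∫ r in (0 : ℝ)..s, truncWeight τ r

lemma continuous_truncWeight (τ : ℝ) : Continuous (truncWeight τ) := by
  unfold truncWeight
  fun_prop

lemma truncWeight_nonneg (τ s : ℝ) : 0 ≤ truncWeight τ s := le_max_left _ _

lemma truncWeight_le_one (τ s : ℝ) : truncWeight τ s ≤ 1 :=
  max_le zero_le_one (min_le_left _ _)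

lemma truncWeight_le_truncWeight (hτ : 0 ≤ τ) (hrs : |r| ≤ |s|) :
    truncWeight τ r ≤ truncWeight τ s := by
  unfold truncWeight
  gcongr

lemma truncWeight_eq_zero (hs : |s| ≤ τ) : truncWeight τ s = 0 := by
  have hquot : |s| / τ ≤ 1 := div_le_one_of_le₀ hs ((abs_nonneg s).trans hs)
  exact max_eq_left ((min_le_right _ _).trans (sub_nonpos.2 hquot))

lemma truncWeight_eq_one (hτ : 0 < τ) (hs : 2 * τ ≤ |s|) : truncWeight τ s = 1 := by
  have hquot : 2 ≤ |s| / τ := (le_div_iff₀ hτ).2 hs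
  rw [truncWeight, min_eq_left (by linarith), max_eq_right zero_le_one]

lemma hasDerivAt_trunc (τ s : ℝ) : HasDerivAt (trunc τ) (truncWeight τ s) s :=
  (continuous_truncWeight τ).integral_hasStrictDerivAt 0 s |>.hasDerivAt

lemma contDiff_trunc (τ : ℝ) : ContDiff ℝ 1 (trunc τ) := by
  have hderiv : deriv (trunc τ) = truncWeight τ := funext fun s => (hasDerivAt_trunc τ s).deriv
  rw [contDiff_one_iff_deriv, hderiv]
  exact ⟨fun s => (hasDerivAt_trunc τ s).differentiableAt, continuous_truncWeight τ⟩

lemma abs_trunc_le (hτ : 0 ≤ τ) (s : ℝ) : |trunc τ s| ≤ truncWeight τ s * |s| := by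
  have hbound : ∀ r ∈ Set.uIoc 0 s, ‖truncWeight τ r‖ ≤ truncWeight τ s := fun r hr => by
    rw [Real.norm_of_nonneg (truncWeight_nonneg τ r)]
    have habs : |r| ≤ |s| := by
      simpa using Set.abs_sub_left_of_mem_uIcc (Set.uIoc_subset_uIcc hr)
    exact truncWeight_le_truncWeight hτ habs
  simpa [trunc] using intervalIntegral.norm_integral_le_of_norm_le_const hbound

lemma trunc_eq_zero (hs : |s| ≤ τ) : trunc τ s = 0 := by
  simpa [truncWeight_eq_zero hs] using abs_trunc_le ((abs_nonneg s).trans hs) s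

lemma tendsto_truncWeight_nhdsGT_zero (hs : s ≠ 0) :
    Filter.Tendsto (fun τ => truncWeight τ s) (nhdsWithin 0 (Set.Ioi 0)) (nhds 1) := by
  refine tendsto_const_nhds.congr' ?_
  filter_upwards [Ioo_mem_nhdsGT (half_pos (abs_pos.2 hs))] with τ hτ
  exact (truncWeight_eq_one hτ.1 (by linarith [hτ.2])).symm

end Truncation

section CompactSupport

variable {E : Type*} [NormedAddCommGroup E] [NormedSpace ℝ E] [FiniteDimensional ℝ E]
  [MeasurableSpace E] [BorelSpace E] (μ : Measure E) [μ.IsAddHaarMeasure]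

lemma integrable_and_integral_fderiv_eq_zero {F : E → ℝ} (hF : ContDiff ℝ 1 F)
    (hsupp : HasCompactSupport F) (v : E) :
    Integrable (fun x => fderiv ℝ F x v) μ ∧ ∫ x, fderiv ℝ F x v ∂μ = 0 := by
  have hint : Integrable (fun x => fderiv ℝ F x v) μ :=
    ((hF.continuous_fderiv one_ne_zero).clm_apply
      continuous_const).integrable_of_hasCompactSupport (hsupp.fderiv_apply (𝕜 := ℝ) v)
  have hparts := integral_mul_fderiv_eq_neg_fderiv_mul_of_integrable (μ := μ) (𝕜 := ℝ)
    (f := fun _ => (1 : ℝ)) (g := F) (v := v) (by simp) (by simpa using hint)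
    (by simpa using hF.continuous.integrable_of_hasCompactSupport hsupp)
    (fun _ _ => differentiableAt_const _) (fun x _ => hF.differentiable one_ne_zero x)
  exact ⟨hint, by simpa using hparts⟩

lemma integrableOn_and_setIntegral_fderiv_eq_zero {U K : Set E} (hU : IsOpen U) (hK : IsCompact K)
    (hKU : K ⊆ U) {F : E → ℝ} (hF : ContDiffOn ℝ 1 F U) (hFK : ∀ x ∈ U, x ∉ K → F x = 0) (v : E) :
    IntegrableOn (fun x => fderiv ℝ F x v) U μ ∧ ∫ x in U, fderiv ℝ F x v ∂μ = 0 := by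
  have heqOn : Set.EqOn (U.indicator F) F U := Set.eqOn_indicator
  have hzero : ∀ x ∉ K, U.indicator F x = 0 := fun x hx => by
    simpa using fun hxU => hFK x hxU hx
  have hsmooth : ContDiff ℝ 1 (U.indicator F) := by
    refine contDiff_iff_contDiffAt.2 fun x => ?_
    by_cases hx : x ∈ K
    · have hUx := hU.mem_nhds (hKU hx)
      exact (hF.contDiffAt hUx).congr_of_eventuallyEq (heqOn.eventuallyEq_of_mem hUx)
    · exact (contDiffAt_const (c := 0)).congr_of_eventuallyEq
        (Filter.eventually_of_mem (hK.isClosed.isOpen_compl.mem_nhds hx) hzero)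
  have hsupp : HasCompactSupport (U.indicator F) := HasCompactSupport.intro hK hzero
  obtain ⟨hint, hint0⟩ := integrable_and_integral_fderiv_eq_zero μ hsmooth hsupp v
  have hfderiv : Set.EqOn (fun x => fderiv ℝ (U.indicator F) x v) (fun x => fderiv ℝ F x v) U :=
    fun x hx => by
      simp only [(heqOn.eventuallyEq_of_mem (hU.mem_nhds hx)).fderiv_eq]
  refine ⟨hint.integrableOn.congr_fun hfderiv hU.measurableSet, ?_⟩
  rw [← setIntegral_congr_fun hU.measurableSet hfderiv,
    setIntegral_eq_integral_of_forall_compl_eq_zero, hint0]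
  intro x hx
  have hx' : x ∉ tsupport (U.indicator F) := fun hmem =>
    hx (hKU (closure_minimal (Function.support_subset_iff'.2 hzero) hK.isClosed hmem))
  simp [fderiv_of_notMem_tsupport (𝕜 := ℝ) hx']

/-- On its zero set `w` is approximated to order zero by the linear map `0`, hence its derivative is
`0` at the density points of that set. -/
lemma ae_fderiv_eq_zero_of_eq_zero {U : Set E} (hU : IsOpen U) {w : E → ℝ}
    (hw : DifferentiableOn ℝ w U) :
    ∀ᵐ x ∂μ, x ∈ U → w x = 0 → fderiv ℝ w x = 0 := by
  rcases subsingleton_or_nontrivial E with _ | _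
  · exact .of_forall fun x _ _ => Subsingleton.elim _ _
  obtain ⟨e, he⟩ := exists_ne (0 : E)
  have hmeas : MeasurableSet (U ∩ w ⁻¹' {0}) := by
    have hopen := hw.continuousOn.isOpen_inter_preimage hU (isOpen_compl_singleton (x := 0))
    simpa [Set.sdiff_self_inter] using hU.measurableSet.diff hopen.measurableSet
  have happrox : ApproximatesLinearOn (fun x => w x • e) (0 : E →L[ℝ] E) (U ∩ w ⁻¹' {0}) 0 :=
    fun x hx y hy => by simp [show w x = 0 from hx.2, show w y = 0 from hy.2]
  have hderiv := happrox.norm_fderiv_sub_le μ hmeas (fun x => (fderiv ℝ w x).smulRight e)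
    fun x hx =>
      ((hw.differentiableAt (hU.mem_nhds hx.1)).hasFDerivAt.smul_const e).hasFDerivWithinAt
  rw [ae_restrict_iff' hmeas] at hderiv
  filter_upwards [hderiv] with x hx hxU hwx
  simpa [he] using hx ⟨hxU, hwx⟩

end CompactSupport

section Caccioppoli

lemma lintegral_ofReal_le_of_le_add {α : Type*} {m : MeasurableSpace α} {μ : Measure α}
    {f g h : α → ℝ} (hint : Integrable h μ) (hint0 : ∫ x, h x ∂μ = 0)
    (hf : ∀ᵐ x ∂μ, 0 ≤ f x) (hle : ∀ᵐ x ∂μ, f x ≤ h x + g x) :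
    ∫⁻ x, ENNReal.ofReal (f x) ∂μ ≤ ∫⁻ x, ENNReal.ofReal (g x) ∂μ := by
  have hparts : ∫⁻ x, ENNReal.ofReal (h x) ∂μ = ∫⁻ x, ENNReal.ofReal (-h x) ∂μ := by
    rw [integral_eq_lintegral_pos_part_sub_lintegral_neg_part hint, sub_eq_zero] at hint0
    exact (ENNReal.toReal_eq_toReal_iff' hint.lintegral_lt_top.ne
      hint.neg.lintegral_lt_top.ne).1 hint0
  have hmeas := hint.aestronglyMeasurable.aemeasurable
  refine ENNReal.le_of_add_le_add_right hint.neg.lintegral_lt_top.ne ?_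
  calc (∫⁻ x, ENNReal.ofReal (f x) ∂μ) + ∫⁻ x, ENNReal.ofReal (-h x) ∂μ
      = ∫⁻ x, ENNReal.ofReal (f x) + ENNReal.ofReal (-h x) ∂μ :=
        (lintegral_add_right' _ hmeas.neg.ennreal_ofReal).symm
    _ ≤ ∫⁻ x, ENNReal.ofReal (g x) + ENNReal.ofReal (h x) ∂μ := by
        refine lintegral_mono_ae ?_
        filter_upwards [hf, hle] with x hfx hx
        rcases le_total 0 (h x) with hpos | hneg
        · rw [ENNReal.ofReal_of_nonpos (neg_nonpos.2 hpos), add_zero, add_comm]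
          exact (ENNReal.ofReal_le_ofReal hx).trans ENNReal.ofReal_add_le
        · rw [← ENNReal.ofReal_add hfx (neg_nonneg.2 hneg), ENNReal.ofReal_of_nonpos hneg, add_zero]
          exact ENNReal.ofReal_le_ofReal (by linarith)
    _ = (∫⁻ x, ENNReal.ofReal (g x) ∂μ) + ∫⁻ x, ENNReal.ofReal (-h x) ∂μ := by
        rw [lintegral_add_right' _ hmeas.ennreal_ofReal, hparts]

/-- One component of the tested equation: `p = ∂_i w`, `a = X_i - ∂_i w`, `b = ∂_i χ`, and
`2 χ b G + χ² g p` is the derivative of the test function `χ² G(w)` with `g = G'(w)`. -/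
lemma weighted_sq_le_flux_mul_add {χ b G g p a w : ℝ} (hg : 0 ≤ g) (hG : |G| ≤ g * |w|) :
    g * (χ * p) ^ 2 ≤ 2 * ((p + a) * (2 * χ * b * G + χ ^ 2 * (g * p))) +
      g * (4 * (χ * a) ^ 2 + 10 * (b * w) ^ 2) := by
  have hcross : ∀ q : ℝ, -(g * |b * w * (χ * q)|) ≤ G * (b * (χ * q)) := fun q =>
    neg_le_of_abs_le <| calc
      |G * (b * (χ * q))| = |G| * |b * (χ * q)| := abs_mul _ _
      _ ≤ g * |w| * |b * (χ * q)| := by gcongr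
      _ = g * |b * w * (χ * q)| := by simp only [abs_mul]; ring
  have hp : 4 * |b * w * (χ * p)| ≤ (χ * p) ^ 2 / 2 + 8 * (b * w) ^ 2 := by
    rw [abs_mul, ← sq_abs (χ * p), ← sq_abs (b * w)]
    nlinarith [sq_nonneg (|χ * p| - 4 * |b * w|)]
  have ha : 4 * |b * w * (χ * a)| ≤ 2 * (χ * a) ^ 2 + 2 * (b * w) ^ 2 := by
    rw [abs_mul, ← sq_abs (χ * a), ← sq_abs (b * w)]
    nlinarith [sq_nonneg (|χ * a| - |b * w|)]
  have hpa : -(χ * p) ^ 2 / 2 - 2 * (χ * a) ^ 2 ≤ 2 * ((χ * p) * (χ * a)) := by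
    nlinarith [sq_nonneg (χ * p + 2 * (χ * a))]
  nlinarith [hcross p, hcross a, mul_le_mul_of_nonneg_left hp hg, mul_le_mul_of_nonneg_left ha hg,
    mul_le_mul_of_nonneg_left hpa hg]

variable {E : Type*} [NormedAddCommGroup E] [NormedSpace ℝ E] {ι : Type*} [Fintype ι]
  {U : Set E} {X : ι → E → ℝ} {e : ι → E} {w χ : E → ℝ} {τ : ℝ}

lemma sum_fderiv_mul_apply_of_divergence_eq_zero {ζ : E → ℝ} {x : E}
    (hX : ∀ i, DifferentiableAt ℝ (X i) x) (hdiv : ∑ i, fderiv ℝ (X i) x (e i) = 0)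
    (hζ : DifferentiableAt ℝ ζ x) :
    ∑ i, fderiv ℝ (fun y => X i y * ζ y) x (e i) = ∑ i, X i x * fderiv ℝ ζ x (e i) := by
  simp [fderiv_fun_mul (hX _) hζ, Finset.sum_add_distrib, ← Finset.mul_sum, hdiv]

lemma fderiv_sq_mul_trunc_apply {x : E} (hw : DifferentiableAt ℝ w x)
    (hχ : DifferentiableAt ℝ χ x) (v : E) :
    fderiv ℝ (fun y => χ y ^ 2 * trunc τ (w y)) x v = 2 * χ x * fderiv ℝ χ x v * trunc τ (w x) +
      χ x ^ 2 * (truncWeight τ (w x) * fderiv ℝ w x v) := by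
  have htrunc := (hasDerivAt_trunc τ (w x)).comp_hasFDerivAt x hw.hasFDerivAt
  have hprod : HasFDerivAt (fun y => χ y ^ 2 * trunc τ (w y)) _ x :=
    (hχ.hasFDerivAt.pow 2).mul htrunc
  rw [hprod.fderiv]
  simp only [Nat.add_one_sub_one, pow_one, nsmul_eq_mul, Nat.cast_ofNat, add_apply, smul_apply,
    smul_eq_mul]
  ring

variable [FiniteDimensional ℝ E] [MeasurableSpace E] [BorelSpace E] {μ : Measure E}
  [μ.IsAddHaarMeasure]

/-- The field `X` is tested against `χ² G(w)` with `G = trunc τ`, which is compactly supported. -/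
lemma lintegral_truncWeight_mul_energy_le (hU : IsOpen U) (hX : ∀ i, ContDiffOn ℝ 1 (X i) U)
    (hdiv : ∀ x ∈ U, ∑ i, fderiv ℝ (X i) x (e i) = 0) (hw : ContDiffOn ℝ 1 w U)
    (hχ : ContDiffOn ℝ 1 χ U) (hτ : 0 ≤ τ) {K : Set E} (hK : IsCompact K) (hKU : K ⊆ U)
    (hvanish : ∀ x ∈ U, x ∉ K → χ x = 0 ∨ |w x| ≤ τ) :
    ∫⁻ x in U, ENNReal.ofReal (truncWeight τ (w x) * ∑ i, (χ x * fderiv ℝ w x (e i)) ^ 2) ∂μ ≤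
      ∫⁻ x in U, ENNReal.ofReal (∑ i, (4 * (χ x * (X i x - fderiv ℝ w x (e i))) ^ 2 +
        10 * (fderiv ℝ χ x (e i) * w x) ^ 2)) ∂μ := by
  set ζ : E → ℝ := fun x => χ x ^ 2 * trunc τ (w x)
  have hζ : ContDiffOn ℝ 1 ζ U := (hχ.pow 2).mul ((contDiff_trunc τ).comp_contDiffOn hw)
  have hζK : ∀ x ∈ U, x ∉ K → ζ x = 0 := fun x hx hxK => by
    rcases hvanish x hx hxK with h | h
    · simp [ζ, h]
    · simp [ζ, trunc_eq_zero h]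
  have hflux := fun i => integrableOn_and_setIntegral_fderiv_eq_zero μ hU hK hKU
    ((hX i).mul hζ) (fun x hx hxK => mul_eq_zero_of_right _ (hζK x hx hxK)) (e i)
  refine lintegral_ofReal_le_of_le_add
    (h := fun x => 2 * ∑ i, fderiv ℝ (fun y => X i y * ζ y) x (e i)) ?_ ?_ ?_ ?_
  · exact (integrable_finsetSum _ fun i _ => (hflux i).1).const_mul 2
  · rw [integral_const_mul, integral_finsetSum _ fun i _ => (hflux i).1,
      Finset.sum_eq_zero fun i _ => (hflux i).2, mul_zero]
  · exact .of_forall fun x =>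
      mul_nonneg (truncWeight_nonneg _ _) (Finset.sum_nonneg fun _ _ => sq_nonneg _)
  refine (ae_restrict_iff' hU.measurableSet).2 (.of_forall fun x hx => ?_)
  have hdiff : ∀ {f : E → ℝ}, ContDiffOn ℝ 1 f U → DifferentiableAt ℝ f x := fun hf =>
    (hf.contDiffAt (hU.mem_nhds hx)).differentiableAt one_ne_zero
  rw [sum_fderiv_mul_apply_of_divergence_eq_zero (fun i => hdiff (hX i)) (hdiv x hx) (hdiff hζ),
    Finset.mul_sum, Finset.mul_sum, ← Finset.sum_add_distrib]
  refine Finset.sum_le_sum fun i _ => ?_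
  have hpoint := weighted_sq_le_flux_mul_add (χ := χ x) (b := fderiv ℝ χ x (e i))
    (p := fderiv ℝ w x (e i)) (a := X i x - fderiv ℝ w x (e i)) (truncWeight_nonneg τ (w x))
    (abs_trunc_le hτ (w x))
  rw [← fderiv_sq_mul_trunc_apply (hdiff hw) (hdiff hχ), add_sub_cancel] at hpoint
  exact hpoint.trans (add_le_add_right (mul_le_of_le_one_left (by positivity)
    (truncWeight_le_one _ _)) _)

/-- The weight `truncWeight τ (w x)` tends to the indicator of `{w ≠ 0}`, and the gradient of `w`
vanishes almost everywhere on `{w = 0}`, so that Fatou's lemma gives the unweighted inequality. -/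
theorem lintegral_energy_le_of_divergence_eq_zero (hU : IsOpen U)
    (hX : ∀ i, ContDiffOn ℝ 1 (X i) U) (hdiv : ∀ x ∈ U, ∑ i, fderiv ℝ (X i) x (e i) = 0)
    (hw : ContDiffOn ℝ 1 w U) (hχ : ContDiffOn ℝ 1 χ U)
    (hvanish : ∀ τ > 0, ∃ K, IsCompact K ∧ K ⊆ U ∧ ∀ x ∈ U, x ∉ K → χ x = 0 ∨ |w x| ≤ τ) :
    ∫⁻ x in U, ENNReal.ofReal (∑ i, (χ x * fderiv ℝ w x (e i)) ^ 2) ∂μ ≤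
      ∫⁻ x in U, ENNReal.ofReal (∑ i, (4 * (χ x * (X i x - fderiv ℝ w x (e i))) ^ 2 +
        10 * (fderiv ℝ χ x (e i) * w x) ^ 2)) ∂μ := by
  obtain ⟨τ, -, hτpos, hτlim⟩ := exists_seq_strictAnti_tendsto' (zero_lt_one' ℝ)
  have hτ : Filter.Tendsto τ Filter.atTop (nhdsWithin 0 (Set.Ioi 0)) :=
    tendsto_nhdsWithin_iff.2 ⟨hτlim, .of_forall fun k => (hτpos k).1⟩
  set energy : E → ℝ := fun x => ∑ i, (χ x * fderiv ℝ w x (e i)) ^ 2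
  have henergy : AEMeasurable energy (μ.restrict U) :=
    Finset.aemeasurable_fun_sum _ fun i _ =>
      ((hχ.continuousOn.aemeasurable hU.measurableSet).mul
        (measurable_fderiv_apply_const ℝ w (e i)).aemeasurable).pow_const 2
  have hlim : ∀ᵐ x ∂μ.restrict U, Filter.Tendsto
      (fun k => ENNReal.ofReal (truncWeight (τ k) (w x) * energy x)) Filter.atTop
      (nhds (ENNReal.ofReal (energy x))) := by
    rw [ae_restrict_iff' hU.measurableSet]
    filter_upwards [ae_fderiv_eq_zero_of_eq_zero μ hU (hw.differentiableOn one_ne_zero)]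
      with x hx hxU
    by_cases hwx : w x = 0
    · simp [energy, hx hxU hwx]
    · simpa using ENNReal.tendsto_ofReal
        (((tendsto_truncWeight_nhdsGT_zero hwx).comp hτ).mul_const (energy x))
  calc ∫⁻ x in U, ENNReal.ofReal (energy x) ∂μ
      = ∫⁻ x in U, Filter.liminf (fun k => ENNReal.ofReal (truncWeight (τ k) (w x) * energy x))
          Filter.atTop ∂μ := lintegral_congr_ae (hlim.mono fun x hx => hx.liminf_eq.symm)
    _ ≤ Filter.liminf (fun k => ∫⁻ x in U,
          ENNReal.ofReal (truncWeight (τ k) (w x) * energy x) ∂μ) Filter.atTop :=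
        lintegral_liminf_le' fun k => ((((continuous_truncWeight (τ k)).comp_continuousOn
          hw.continuousOn).aemeasurable hU.measurableSet).mul henergy).ennreal_ofReal
    _ ≤ _ := Filter.liminf_le_of_frequently_le' <| Filter.Frequently.of_forall fun k => by
        obtain ⟨K, hK, hKU, hKvanish⟩ := hvanish (τ k) (hτpos k).1
        exact lintegral_truncWeight_mul_energy_le hU hX hdiv hw hχ (hτpos k).1.le hK hKU hKvanish

end Caccioppoli

section C2norm

/-- If `g` coincides with `f` on a set `t` accumulating nondegenerately at `x`, the junk value
`fderiv ℝ g x = 0` is the only alternative to `fderiv ℝ g x` being the derivative of `f`. -/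
lemma norm_fderiv_le_norm_fderivWithin {E F : Type*} [NormedAddCommGroup E] [NormedSpace ℝ E]
    [NormedAddCommGroup F] [NormedSpace ℝ F] {f g : E → F} {s t : Set E} {x : E} (hts : t ⊆ s)
    (ht : UniqueDiffWithinAt ℝ t x) (heq : Set.EqOn g f t) (hf : DifferentiableWithinAt ℝ f s x) :
    ‖fderiv ℝ g x‖ ≤ ‖fderivWithin ℝ f s x‖ := by
  by_cases hg : DifferentiableAt ℝ g x
  swap
  · simp [fderiv_zero_of_not_differentiableAt hg]
  have : (nhdsWithin x t).NeBot := mem_closure_iff_nhdsWithin_neBot.1 ht.mem_closure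
  have hval : g x = f x := tendsto_nhds_unique_of_eventuallyEq
    hg.continuousAt.continuousWithinAt.tendsto (hf.continuousWithinAt.mono hts).tendsto
    heq.eventuallyEq_nhdsWithin
  have hderiv : HasFDerivWithinAt f (fderiv ℝ g x) t x :=
    hg.hasFDerivAt.hasFDerivWithinAt.congr heq.symm hval.symm
  rw [ht.eq hderiv (hf.hasFDerivWithinAt.mono hts)]

variable {F : Type*} [NormedAddCommGroup F] [NormedSpace ℝ F] {n : ℕ} {f : Ep n → F} {y : Ep n}

lemma bddAbove_range_C2norm (hf : ContDiffOn ℝ 2 f (closedBall 0 1)) :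
    BddAbove (Set.range fun y : closedBall (0 : Ep n) 1 =>
      ‖f (y : Ep n)‖ + ‖fderiv ℝ f (y : Ep n)‖ + ‖fderiv ℝ (fderiv ℝ f) (y : Ep n)‖) := by
  set B : Set (Ep n) := closedBall 0 1
  have hB : UniqueDiffOn ℝ B := uniqueDiffOn_convex (convex_closedBall 0 1)
    ⟨0, ball_subset_interior_closedBall (mem_ball_self one_pos)⟩
  have hball : ∀ y ∈ B, UniqueDiffWithinAt ℝ (ball (0 : Ep n) 1) y := fun y hy =>
    uniqueDiffWithinAt_convex (convex_ball 0 1)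
      ⟨0, by simp [isOpen_ball.interior_eq]⟩
      (closure_ball (0 : Ep n) one_ne_zero ▸ hy)
  have hf1 : ContDiffOn ℝ 1 (fderivWithin ℝ f B) B := hf.fderivWithin hB (by norm_num)
  obtain ⟨c0, hc0⟩ := (isCompact_closedBall (0 : Ep n) 1).exists_bound_of_continuousOn
    hf.continuousOn
  obtain ⟨c1, hc1⟩ := (isCompact_closedBall (0 : Ep n) 1).exists_bound_of_continuousOn
    hf1.continuousOn
  obtain ⟨c2, hc2⟩ := (isCompact_closedBall (0 : Ep n) 1).exists_bound_of_continuousOn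
    (hf1.continuousOn_fderivWithin hB le_rfl)
  refine ⟨c0 + c1 + c2, ?_⟩
  rintro _ ⟨⟨y, hy⟩, rfl⟩
  have hfirst : ‖fderiv ℝ f y‖ ≤ ‖fderivWithin ℝ f B y‖ :=
    norm_fderiv_le_norm_fderivWithin ball_subset_closedBall (hball y hy) (Set.eqOn_refl _ _)
      (hf.differentiableOn two_ne_zero y hy)
  have hsecond : ‖fderiv ℝ (fderiv ℝ f) y‖ ≤ ‖fderivWithin ℝ (fderivWithin ℝ f B) B y‖ :=
    norm_fderiv_le_norm_fderivWithin ball_subset_closedBall (hball y hy)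
      (fun z hz => (fderivWithin_of_mem_nhds (closedBall_mem_nhds_of_mem hz)).symm)
      (hf1.differentiableOn one_ne_zero y hy)
  exact add_le_add (add_le_add (hc0 y hy) (hfirst.trans (hc1 y hy))) (hsecond.trans (hc2 y hy))

lemma le_C2norm (hf : ContDiffOn ℝ 2 f (closedBall 0 1)) (hy : ‖y‖ ≤ 1) :
    ‖f y‖ + ‖fderiv ℝ f y‖ + ‖fderiv ℝ (fderiv ℝ f) y‖ ≤ C2norm n f :=
  le_ciSup (bddAbove_range_C2norm hf) (⟨y, by simpa using hy⟩ : closedBall (0 : Ep n) 1)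

lemma norm_le_C2norm (hf : ContDiffOn ℝ 2 f (closedBall 0 1)) (hy : ‖y‖ ≤ 1) :
    ‖f y‖ ≤ C2norm n f := by
  linarith [le_C2norm hf hy, norm_nonneg (fderiv ℝ f y), norm_nonneg (fderiv ℝ (fderiv ℝ f) y)]

lemma norm_fderiv_le_C2norm (hf : ContDiffOn ℝ 2 f (closedBall 0 1)) (hy : ‖y‖ ≤ 1) :
    ‖fderiv ℝ f y‖ ≤ C2norm n f := by
  linarith [le_C2norm hf hy, norm_nonneg (f y), norm_nonneg (fderiv ℝ (fderiv ℝ f) y)]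

lemma C2norm_nonneg (hf : ContDiffOn ℝ 2 f (closedBall 0 1)) : 0 ≤ C2norm n f :=
  (norm_nonneg (f 0)).trans (norm_le_C2norm hf (by simp))

lemma norm_fderiv_le_C2norm_mul_norm (hf : ContDiffOn ℝ 2 f (closedBall 0 1))
    (hf0 : fderiv ℝ f 0 = 0) (hy : ‖y‖ < 1) : ‖fderiv ℝ f y‖ ≤ C2norm n f * ‖y‖ := by
  have hdiff : DifferentiableOn ℝ (fderiv ℝ f) (ball 0 1) :=
    ((hf.mono ball_subset_closedBall).fderiv_of_isOpen isOpen_ball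
      (m := 1) (by norm_num)).differentiableOn one_ne_zero
  have hbound : ∀ z ∈ ball (0 : Ep n) 1, ‖fderiv ℝ (fderiv ℝ f) z‖ ≤ C2norm n f := fun z hz => by
    have hz' : ‖z‖ ≤ 1 := (mem_ball_zero_iff.1 hz).le
    linarith [le_C2norm hf hz', norm_nonneg (f z), norm_nonneg (fderiv ℝ f z)]
  simpa [hf0] using (convex_ball (0 : Ep n) 1).norm_image_sub_le_of_norm_fderiv_le
    (fun z hz => hdiff.differentiableAt (isOpen_ball.mem_nhds hz)) hbound
    (mem_ball_self one_pos) (mem_ball_zero_iff.2 hy)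

end C2norm

section Directions

variable {n : ℕ}

lemma dir_fst_eq_zero_or_snd_eq_zero (α : Fin n) : (dir n α).1 = 0 ∨ (dir n α).2 = 0 := by
  unfold dir
  split_ifs <;> simp

lemma norm_dir_fst_le_one (α : Fin n) : ‖(dir n α).1‖ ≤ 1 := by
  unfold dir
  split_ifs <;> simp

lemma sum_dir {M : Type*} [AddCommMonoid M] (hn : n ≠ 0) (f : Efull n → M) :
    ∑ α, f (dir n α) = ∑ i, f (tang n i) + f (vert n) := by
  obtain ⟨m, rfl⟩ := Nat.exists_eq_succ_of_ne_zero hn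
  rw [Fin.sum_univ_castSucc]
  congr 1
  · exact Finset.sum_congr rfl fun i _ => by simp [dir, tang]
  · simp [dir, vert]

lemma norm_sq_le_two_mul_sum_dir (hn : n ≠ 0) (L : Efull n →L[ℝ] ℝ) :
    ‖L‖ ^ 2 ≤ 2 * ∑ α, L (dir n α) ^ 2 := by
  set H : Ep n →L[ℝ] ℝ := L.comp (.inl ℝ (Ep n) ℝ)
  have hhor : ‖H‖ ^ 2 = ∑ i, L (tang n i) ^ 2 := by
    simp [(EuclideanSpace.basisFun (Fin (n - 1)) ℝ).norm_dual, H, tang]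
  have hsplit : ‖L‖ ≤ ‖H‖ + |L (vert n)| := by
    refine L.opNorm_le_bound (by positivity) fun x => ?_
    have hx : L x = H x.1 + x.2 * L (vert n) := by
      rw [← smul_eq_mul, ← map_smul]
      simp [H, vert, ← map_add]
    calc ‖L x‖ ≤ ‖H x.1‖ + ‖x.2 * L (vert n)‖ := hx ▸ norm_add_le _ _
      _ ≤ ‖H‖ * ‖x‖ + ‖x‖ * |L (vert n)| := by
          rw [norm_mul]
          exact add_le_add (H.le_opNorm_of_le (norm_fst_le x))
            (mul_le_mul_of_nonneg_right (norm_snd_le x) (abs_nonneg _))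
      _ = (‖H‖ + |L (vert n)|) * ‖x‖ := by ring
  calc ‖L‖ ^ 2 ≤ (‖H‖ + |L (vert n)|) ^ 2 := by gcongr
    _ ≤ 2 * (‖H‖ ^ 2 + |L (vert n)| ^ 2) := add_sq_le
    _ = 2 * ∑ α, L (dir n α) ^ 2 := by rw [sum_dir hn fun v => L v ^ 2, hhor, sq_abs]

end Directions

section RegionBetween

variable {X : Type*} [TopologicalSpace X] {f g : X → ℝ}

lemma isOpen_regionBetween {s : Set X} (hs : IsOpen s) (hf : ContinuousOn f s)
    (hg : ContinuousOn g s) : IsOpen (regionBetween f g s) := by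
  have hfst : Set.MapsTo Prod.fst (Prod.fst ⁻¹' s : Set (X × ℝ)) s := Set.mapsTo_preimage _ _
  have hbelow := ((hf.comp continuousOn_fst hfst).prodMk continuousOn_snd).isOpen_inter_preimage
    (hs.preimage continuous_fst) isOpen_lt_prod
  have habove := (continuousOn_snd.prodMk (hg.comp continuousOn_fst hfst)).isOpen_inter_preimage
    (hs.preimage continuous_fst) isOpen_lt_prod
  convert hbelow.inter habove using 1
  ext p
  exact and_and_left

lemma isCompact_setOf_mem_Icc {K : Set X} (hK : IsCompact K) (hKc : IsClosed K)
    (hf : ContinuousOn f K) (hg : ContinuousOn g K) :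
    IsCompact {p : X × ℝ | p.1 ∈ K ∧ p.2 ∈ Set.Icc (f p.1) (g p.1)} := by
  obtain ⟨a, ha⟩ := hK.bddBelow_image hf
  obtain ⟨b, hb⟩ := hK.bddAbove_image hg
  have hfst : Set.MapsTo Prod.fst (Prod.fst ⁻¹' K : Set (X × ℝ)) K := Set.mapsTo_preimage _ _
  have hclosed := hKc.preimage (continuous_fst (Y := ℝ))
  have hbelow := hclosed.isClosed_le (hf.comp continuousOn_fst hfst) continuousOn_snd
  have habove := hclosed.isClosed_le continuousOn_snd (hg.comp continuousOn_fst hfst)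
  refine (hK.prod (isCompact_Icc (a := a) (b := b))).of_isClosed_subset ?_ ?_
  · convert hbelow.inter habove using 1
    ext p
    exact and_and_left
  · rintro ⟨y, t⟩ ⟨hy, hft, htg⟩
    exact ⟨hy, (ha ⟨y, hy, rfl⟩).trans hft, htg.trans (hb ⟨y, hy, rfl⟩)⟩

end RegionBetween

lemma lintegral_regionBetween_comp_fst {X : Type*} [MeasurableSpace X] {μ : Measure X} [SFinite μ]
    {f g : X → ℝ} {s : Set X} (hs : MeasurableSet s)
    (hregion : MeasurableSet (regionBetween f g s))
    {F : X → ENNReal} (hF : AEMeasurable F (μ.restrict s)) :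
    ∫⁻ p in regionBetween f g s, F p.1 ∂μ.prod volume =
      ∫⁻ y in s, F y * ENNReal.ofReal (g y - f y) ∂μ := by
  have hmeas : AEMeasurable (fun p : X × ℝ => F p.1)
      ((μ.prod volume).restrict (regionBetween f g s)) := by
    refine AEMeasurable.mono_measure (hF.comp_fst (ν := volume)) ?_
    have hsub : regionBetween f g s ⊆ s ×ˢ Set.univ := fun p hp => ⟨hp.1, Set.mem_univ _⟩
    simpa only [Measure.restrict_univ] using
      (Measure.restrict_mono hsub le_rfl).trans_eq (Measure.prod_restrict s Set.univ).symm
  rw [← lintegral_indicator hregion, ← lintegral_indicator hs,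
    lintegral_prod _ ((aemeasurable_indicator_iff hregion).2 hmeas)]
  refine lintegral_congr fun y => ?_
  by_cases hy : y ∈ s
  · have hfibre : ∀ t, (regionBetween f g s).indicator (fun p => F p.1) (y, t) =
        (Set.Ioo (f y) (g y)).indicator (fun _ => F y) t := fun t => by
      classical
      have hmem : (y, t) ∈ regionBetween f g s ↔ t ∈ Set.Ioo (f y) (g y) := and_iff_right hy
      simp only [Set.indicator_apply, hmem]
    simp [hfibre, hy]
  · simp [regionBetween, hy]

lemma isCompact_superlevel_subset {X : Type*} [TopologicalSpace X] [T2Space X] {S U : Set X}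
    (hS : IsCompact S) {w : X → ℝ} (hw : ContinuousOn w S) (hzero : ∀ x ∈ S, x ∉ U → w x = 0)
    {τ : ℝ} (hτ : 0 < τ) :
    IsCompact {x ∈ S | τ ≤ |w x|} ∧ {x ∈ S | τ ≤ |w x|} ⊆ U := by
  refine ⟨hS.of_isClosed_subset (hS.isClosed.isClosed_le continuousOn_const hw.abs)
    (Set.sep_subset _ _), fun x hx => ?_⟩
  by_contra hxU
  have : τ ≤ |w x| := hx.2
  rw [hzero x hx.1 hxU, abs_zero] at this
  linarith

section NarrowRegion

variable {n : ℕ} {ε r : ℝ} {h1 h2 : Ep n → ℝ}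

/-- The vertical thickness `δ(x') = ε + h1(x') - h2(x')` of the narrow region above `x'`. -/
def gap (ε : ℝ) (h1 h2 : Ep n → ℝ) (y : Ep n) : ℝ := ε + h1 y - h2 y

lemma Omega_eq_regionBetween : Omega n ε h1 h2 r =
    regionBetween (fun y => -ε / 2 + h2 y) (fun y => ε / 2 + h1 y) (ball 0 r) := by
  ext x
  simp [Omega, regionBetween]

lemma isOpen_Omega (hh1 : ContinuousOn h1 (ball 0 r)) (hh2 : ContinuousOn h2 (ball 0 r)) :
    IsOpen (Omega n ε h1 h2 r) :=
  Omega_eq_regionBetween ▸ isOpen_regionBetween isOpen_ball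
    (continuousOn_const.add hh2) (continuousOn_const.add hh1)

/-- The closed counterpart of `Ω_r`, bounded by `Γ_r⁺`, `Γ_r⁻` and the lateral boundary `|x'| = r`;
it is compact, which `Ω_r ∪ Γ_r⁺ ∪ Γ_r⁻` is not. -/
def closedRegion (ε : ℝ) (h1 h2 : Ep n → ℝ) (r : ℝ) : Set (Efull n) :=
  {x | x.1 ∈ closedBall 0 r ∧ x.2 ∈ Set.Icc (-ε / 2 + h2 x.1) (ε / 2 + h1 x.1)}

lemma isCompact_closedRegion (hh1 : ContinuousOn h1 (closedBall 0 r))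
    (hh2 : ContinuousOn h2 (closedBall 0 r)) : IsCompact (closedRegion ε h1 h2 r) :=
  isCompact_setOf_mem_Icc (isCompact_closedBall 0 r) isClosed_closedBall
    (continuousOn_const.add hh2) (continuousOn_const.add hh1)

lemma Omega_subset_closedRegion : Omega n ε h1 h2 r ⊆ closedRegion ε h1 h2 r :=
  fun _ hx => ⟨mem_closedBall_zero_iff.2 hx.1.le, hx.2.1.le, hx.2.2.le⟩

lemma closedRegion_subset_union {R : ℝ} (hr : r < R) : closedRegion ε h1 h2 r ⊆
    Omega n ε h1 h2 R ∪ Gammap n ε h1 R ∪ Gammam n ε h2 R := by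
  rintro x ⟨hx, hbot, htop⟩
  have hxR : ‖x.1‖ < R := (mem_closedBall_zero_iff.1 hx).trans_lt hr
  rcases htop.lt_or_eq with htop | htop
  · rcases hbot.lt_or_eq with hbot | hbot
    · exact .inl (.inl ⟨hxR, hbot, htop⟩)
    · exact .inr ⟨hxR.le, hbot.symm⟩
  · exact .inl (.inr ⟨hxR.le, htop⟩)

lemma volume_Omega_lt_top (hh1 : ContinuousOn h1 (closedBall 0 r))
    (hh2 : ContinuousOn h2 (closedBall 0 r)) : volume (Omega n ε h1 h2 r) < ⊤ :=
  (measure_mono Omega_subset_closedRegion).trans_lt (isCompact_closedRegion hh1 hh2).measure_lt_top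

/-- The vertical fibre over `x'` has length `δ(x')`, which cancels the weight. -/
lemma lintegral_inv_gap (hh1 : ContinuousOn h1 (ball 0 r)) (hh2 : ContinuousOn h2 (ball 0 r))
    (hgap : ∀ y ∈ ball 0 r, 0 < gap ε h1 h2 y) :
    ∫⁻ x in Omega n ε h1 h2 r, ENNReal.ofReal (gap ε h1 h2 x.1)⁻¹ =
      volume (ball (0 : Ep n) r) := by
  have hmeas : MeasurableSet (Omega n ε h1 h2 r) := (isOpen_Omega hh1 hh2).measurableSet
  have hgapc : ContinuousOn (gap ε h1 h2) (ball 0 r) := (continuousOn_const.add hh1).sub hh2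
  rw [Omega_eq_regionBetween] at hmeas ⊢
  rw [Measure.volume_eq_prod, lintegral_regionBetween_comp_fst measurableSet_ball hmeas
    (F := fun y => ENNReal.ofReal (gap ε h1 h2 y)⁻¹)
    ((hgapc.inv₀ fun y hy => (hgap y hy).ne').aemeasurable measurableSet_ball).ennreal_ofReal,
    ← setLIntegral_one]
  refine setLIntegral_congr_fun measurableSet_ball fun y hy => ?_
  have hfibre : ε / 2 + h1 y - (-ε / 2 + h2 y) = gap ε h1 h2 y := by
    unfold gap
    ring
  rw [hfibre, ← ENNReal.ofReal_mul (inv_nonneg.2 (hgap y hy).le), inv_mul_cancel₀ (hgap y hy).ne',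
    ENNReal.ofReal_one]

end NarrowRegion

section Interpolation

variable {n : ℕ} {ε r : ℝ} {h1 h2 φ ψ : Ep n → ℝ} {x : Efull n}

lemma contDiffOn_ubar {k : WithTop ℕ∞} {s : Set (Ep n)} (hh1 : ContDiffOn ℝ k h1 s)
    (hh2 : ContDiffOn ℝ k h2 s) (hgap : ∀ y ∈ s, gap ε h1 h2 y ≠ 0) :
    ContDiffOn ℝ k (ubar n ε h1 h2) (Prod.fst ⁻¹' s) := by
  have hfst : Set.MapsTo Prod.fst (Prod.fst ⁻¹' s : Set (Efull n)) s := Set.mapsTo_preimage _ _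
  have h1' := hh1.comp contDiffOn_fst hfst
  have h2' := hh2.comp contDiffOn_fst hfst
  exact ((contDiffOn_snd.sub h2').add contDiffOn_const).div
    ((contDiffOn_const.add h1').sub h2') fun x hx => hgap x.1 hx

lemma contDiffOn_util {k : WithTop ℕ∞} {s : Set (Ep n)} (hh1 : ContDiffOn ℝ k h1 s)
    (hh2 : ContDiffOn ℝ k h2 s) (hφ : ContDiffOn ℝ k φ s) (hψ : ContDiffOn ℝ k ψ s)
    (hgap : ∀ y ∈ s, gap ε h1 h2 y ≠ 0) :
    ContDiffOn ℝ k (util n ε h1 h2 φ ψ) (Prod.fst ⁻¹' s) := by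
  have hfst : Set.MapsTo Prod.fst (Prod.fst ⁻¹' s : Set (Efull n)) s := Set.mapsTo_preimage _ _
  have hubar := contDiffOn_ubar hh1 hh2 hgap
  exact ((hφ.comp contDiffOn_fst hfst).mul hubar).add
    ((hψ.comp contDiffOn_fst hfst).mul (contDiffOn_const.sub hubar))

lemma util_top {y : Ep n} (hgap : gap ε h1 h2 y ≠ 0) :
    util n ε h1 h2 φ ψ (y, ε / 2 + h1 y) = φ y := by
  have hubar : ubar n ε h1 h2 (y, ε / 2 + h1 y) = 1 := by
    refine (div_eq_one_iff_eq hgap).2 ?_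
    simp only [gap]
    ring
  simp [util, hubar]

lemma util_bottom (y : Ep n) : util n ε h1 h2 φ ψ (y, -ε / 2 + h2 y) = ψ y := by
  have hubar : ubar n ε h1 h2 (y, -ε / 2 + h2 y) = 0 := by
    rw [ubar, div_eq_zero_iff]
    exact .inl (by ring)
  simp [util, hubar]

lemma ubar_mem_Icc (hx : x ∈ Omega n ε h1 h2 r) : ubar n ε h1 h2 x ∈ Set.Icc 0 1 := by
  obtain ⟨-, hbot, htop⟩ := hx
  have hgap : 0 < ε + h1 x.1 - h2 x.1 := by linarith
  exact ⟨div_nonneg (by linarith) hgap.le, (div_le_one hgap).2 (by linarith)⟩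

lemma abs_convexComb_le {q : ℝ} (hq : q ∈ Set.Icc 0 1) (a b : ℝ) :
    |q * a + (1 - q) * b| ≤ |a| + |b| := by
  obtain ⟨hq0, hq1⟩ := hq
  calc |q * a + (1 - q) * b| ≤ q * |a| + (1 - q) * |b| := by
        simpa only [abs_mul, abs_of_nonneg hq0, abs_of_nonneg (sub_nonneg.2 hq1)]
          using abs_add_le (q * a) ((1 - q) * b)
    _ ≤ |a| + |b| := add_le_add (mul_le_of_le_one_left (abs_nonneg a) hq1)
        (mul_le_of_le_one_left (abs_nonneg b) (by linarith))

lemma abs_util_le (hx : x ∈ Omega n ε h1 h2 r) :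
    |util n ε h1 h2 φ ψ x| ≤ |φ x.1| + |ψ x.1| := by
  simpa only [util, mul_comm] using abs_convexComb_le (ubar_mem_Icc hx) (φ x.1) (ψ x.1)

lemma differentiableAt_ubar (hh1 : DifferentiableAt ℝ h1 x.1) (hh2 : DifferentiableAt ℝ h2 x.1)
    (hgap : gap ε h1 h2 x.1 ≠ 0) : DifferentiableAt ℝ (ubar n ε h1 h2) x := by
  have h1' := hh1.comp x differentiableAt_fst
  have h2' := hh2.comp x differentiableAt_fst
  have hgap' : DifferentiableAt ℝ (fun z : Efull n => gap ε h1 h2 z.1) x :=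
    (h1'.const_add ε).sub h2'
  have hnum := (differentiableAt_snd.sub h2').add_const (ε / 2)
  exact (hnum.mul (hgap'.inv hgap)).congr_of_eventuallyEq
    (.of_forall fun z => div_eq_mul_inv _ _)

lemma fderiv_ubar_apply (hh1 : DifferentiableAt ℝ h1 x.1) (hh2 : DifferentiableAt ℝ h2 x.1)
    (hgap : gap ε h1 h2 x.1 ≠ 0) (v : Efull n) :
    fderiv ℝ (ubar n ε h1 h2) x v =
      (v.2 - (ubar n ε h1 h2 x * fderiv ℝ h1 x.1 v.1 +
        (1 - ubar n ε h1 h2 x) * fderiv ℝ h2 x.1 v.1)) / gap ε h1 h2 x.1 := by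
  have h1' := hh1.hasFDerivAt.comp x hasFDerivAt_fst
  have h2' := hh2.hasFDerivAt.comp x hasFDerivAt_fst
  have hnum := (hasFDerivAt_snd.sub h2').add_const (ε / 2)
  have hgap' : HasFDerivAt (fun z : Efull n => gap ε h1 h2 z.1) _ x := (h1'.const_add ε).sub h2'
  have hprod := (differentiableAt_ubar hh1 hh2 hgap).hasFDerivAt.mul hgap'
  have hnear : ∀ᶠ z in nhds x, gap ε h1 h2 z.1 ≠ 0 :=
    hgap'.continuousAt.eventually_ne hgap
  have hunique := congrArg (· v) (hprod.unique (hnum.congr_of_eventuallyEq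
    (hnear.mono fun z hz => div_mul_cancel₀ _ hz)))
  rw [eq_div_iff hgap]
  simp only [add_apply, smul_apply, sub_apply, ContinuousLinearMap.comp_apply,
    ContinuousLinearMap.coe_fst', smul_eq_mul, ContinuousLinearMap.coe_snd'] at hunique
  linear_combination hunique

lemma fderiv_util_apply (hh1 : DifferentiableAt ℝ h1 x.1) (hh2 : DifferentiableAt ℝ h2 x.1)
    (hφ : DifferentiableAt ℝ φ x.1) (hψ : DifferentiableAt ℝ ψ x.1)
    (hgap : gap ε h1 h2 x.1 ≠ 0) (v : Efull n) :
    fderiv ℝ (util n ε h1 h2 φ ψ) x v =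
      (ubar n ε h1 h2 x * fderiv ℝ φ x.1 v.1 + (1 - ubar n ε h1 h2 x) * fderiv ℝ ψ x.1 v.1) +
        (φ x.1 - ψ x.1) * fderiv ℝ (ubar n ε h1 h2) x v := by
  have hφ' := hφ.hasFDerivAt.comp x hasFDerivAt_fst
  have hψ' := hψ.hasFDerivAt.comp x hasFDerivAt_fst
  have hubar : HasFDerivAt (ubar n ε h1 h2) (fderiv ℝ (ubar n ε h1 h2) x) x :=
    (differentiableAt_ubar hh1 hh2 hgap).hasFDerivAt
  have hutil := (hφ'.mul hubar).add (hψ'.mul (hubar.const_sub 1))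
  rw [HasFDerivAt.fderiv (f := util n ε h1 h2 φ ψ) hutil]
  simp only [Function.comp_apply, smul_neg, add_apply, smul_apply, smul_eq_mul,
    ContinuousLinearMap.comp_apply, ContinuousLinearMap.coe_fst', neg_apply]
  ring

end Interpolation

section Horizontal

variable {n : ℕ} {ε : ℝ} {h1 h2 φ ψ : Ep n → ℝ} {x : Efull n}

lemma differentiableAt_of_contDiffOn_closedBall {f : Ep n → ℝ} {y : Ep n}
    (hf : ContDiffOn ℝ 2 f (closedBall 0 1)) (hy : ‖y‖ < 1) : DifferentiableAt ℝ f y :=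
  (hf.differentiableOn two_ne_zero).differentiableAt
    (closedBall_mem_nhds_of_mem (mem_ball_zero_iff.2 hy))

/-- The vertical derivative `(φ - ψ) / δ` of `ũ`, as a function of `x'`. -/
def utilSlope (ε : ℝ) (h1 h2 φ ψ : Ep n → ℝ) (y : Ep n) : ℝ := (φ y - ψ y) / gap ε h1 h2 y

lemma fderiv_util_apply_eq_horizontal_add (hh1 : DifferentiableAt ℝ h1 x.1)
    (hh2 : DifferentiableAt ℝ h2 x.1) (hφ : DifferentiableAt ℝ φ x.1)
    (hψ : DifferentiableAt ℝ ψ x.1) (hgap : gap ε h1 h2 x.1 ≠ 0) (v : Efull n) :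
    fderiv ℝ (util n ε h1 h2 φ ψ) x v =
      fderiv ℝ (util n ε h1 h2 φ ψ) x (v.1, 0) + v.2 * utilSlope ε h1 h2 φ ψ x.1 := by
  simp only [fderiv_util_apply hh1 hh2 hφ hψ hgap, fderiv_ubar_apply hh1 hh2 hgap, utilSlope]
  ring

lemma sq_add_mul_neg_div_le {M κ C₀ δ y a b c : ℝ} (hδ : 0 < δ) (ha : |a| ≤ M) (hc : |c| ≤ M)
    (hb : |b| ≤ κ * y) (hδκ : δ ≤ 1 + κ) (hy : y ^ 2 ≤ C₀ * δ) :
    (a + c * (-b / δ)) ^ 2 ≤ 2 * (1 + κ + κ ^ 2 * C₀) * M ^ 2 / δ := by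
  have hc2 : c ^ 2 ≤ M ^ 2 := sq_le_sq' (abs_le.1 hc).1 (abs_le.1 hc).2
  have ha2 : a ^ 2 ≤ M ^ 2 := sq_le_sq' (abs_le.1 ha).1 (abs_le.1 ha).2
  have hb2 : b ^ 2 ≤ κ ^ 2 * C₀ * δ := by
    calc b ^ 2 ≤ (κ * y) ^ 2 := sq_le_sq' (abs_le.1 hb).1 (abs_le.1 hb).2
      _ = κ ^ 2 * y ^ 2 := mul_pow κ y 2
      _ ≤ κ ^ 2 * (C₀ * δ) := by gcongr
      _ = κ ^ 2 * C₀ * δ := by ring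
  have hone : M ^ 2 ≤ (1 + κ) * M ^ 2 / δ := by
    rw [le_div_iff₀ hδ, mul_comm]
    gcongr
  have hslope : (c * (-b / δ)) ^ 2 ≤ κ ^ 2 * C₀ * M ^ 2 / δ := by
    calc (c * (-b / δ)) ^ 2 = c ^ 2 * (b ^ 2 / δ ^ 2) := by ring
      _ ≤ M ^ 2 * (κ ^ 2 * C₀ * δ / δ ^ 2) := by gcongr
      _ = κ ^ 2 * C₀ * M ^ 2 / δ := by field_simp
  calc (a + c * (-b / δ)) ^ 2 ≤ 2 * (a ^ 2 + (c * (-b / δ)) ^ 2) := add_sq_le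
    _ ≤ 2 * ((1 + κ) * M ^ 2 / δ + κ ^ 2 * C₀ * M ^ 2 / δ) := by gcongr; exact ha2.trans hone
    _ = 2 * (1 + κ + κ ^ 2 * C₀) * M ^ 2 / δ := by ring

/-- `∇h₁` and `∇h₂` are `O(|x'|)`, hence `O(δ^{1/2})`, so only half of the factor `1/δ` in `∇ū`
survives in horizontal directions. -/
lemma fderiv_util_horizontal_sq_le {κ C₀ : ℝ} (hε : ε ≤ 1)
    (hh1 : ContDiffOn ℝ 2 h1 (closedBall 0 1)) (hh2 : ContDiffOn ℝ 2 h2 (closedBall 0 1))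
    (hh1' : fderiv ℝ h1 0 = 0) (hh2' : fderiv ℝ h2 0 = 0)
    (hκ : C2norm n h1 + C2norm n h2 ≤ κ)
    (hφ : ContDiffOn ℝ 2 φ (closedBall 0 1)) (hψ : ContDiffOn ℝ 2 ψ (closedBall 0 1))
    (hx : x ∈ Omega n ε h1 h2 1) (hC₀ : ‖x.1‖ ^ 2 ≤ C₀ * gap ε h1 h2 x.1)
    {v : Ep n} (hv : ‖v‖ ≤ 1) :
    fderiv ℝ (util n ε h1 h2 φ ψ) x (v, 0) ^ 2 ≤
      2 * (1 + κ + κ ^ 2 * C₀) * (C2norm n φ + C2norm n ψ) ^ 2 / gap ε h1 h2 x.1 := by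
  have hx1 : ‖x.1‖ < 1 := hx.1
  have hgap : 0 < gap ε h1 h2 x.1 := by
    unfold gap
    linarith [hx.2.1, hx.2.2]
  have happly : ∀ {L : Ep n →L[ℝ] ℝ} {c : ℝ}, ‖L‖ ≤ c → |L v| ≤ c := fun {L} {c} hL =>
    (L.le_of_opNorm_le_of_le hL hv).trans_eq (mul_one c)
  rw [fderiv_util_apply (differentiableAt_of_contDiffOn_closedBall hh1 hx1)
    (differentiableAt_of_contDiffOn_closedBall hh2 hx1)
    (differentiableAt_of_contDiffOn_closedBall hφ hx1)
    (differentiableAt_of_contDiffOn_closedBall hψ hx1) hgap.ne',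
    fderiv_ubar_apply (differentiableAt_of_contDiffOn_closedBall hh1 hx1)
    (differentiableAt_of_contDiffOn_closedBall hh2 hx1) hgap.ne']
  simp only [zero_sub]
  refine sq_add_mul_neg_div_le (y := ‖x.1‖) hgap ?_ ?_ ?_ ?_ hC₀
  · exact (abs_convexComb_le (ubar_mem_Icc hx) _ _).trans (add_le_add
      (happly (norm_fderiv_le_C2norm hφ hx1.le)) (happly (norm_fderiv_le_C2norm hψ hx1.le)))
  · exact (abs_sub _ _).trans (add_le_add (norm_le_C2norm hφ hx1.le) (norm_le_C2norm hψ hx1.le))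
  · calc _ ≤ _ := abs_convexComb_le (ubar_mem_Icc hx) _ _
      _ ≤ C2norm n h1 * ‖x.1‖ + C2norm n h2 * ‖x.1‖ := add_le_add
          (happly (norm_fderiv_le_C2norm_mul_norm hh1 hh1' hx1))
          (happly (norm_fderiv_le_C2norm_mul_norm hh2 hh2' hx1))
      _ ≤ κ * ‖x.1‖ := by
          rw [← add_mul]
          gcongr
  · have h1_le := (le_abs_self _).trans (norm_le_C2norm hh1 hx1.le)
    have h2_le := (neg_le_abs _).trans (norm_le_C2norm hh2 hx1.le)
    unfold gap
    linarith

end Horizontal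

section Flux

variable {n : ℕ} {ε : ℝ} {h1 h2 φ ψ : Ep n → ℝ} {u : Efull n → ℝ} {x : Efull n}

lemma contDiffOn_utilSlope {k : WithTop ℕ∞} {s : Set (Ep n)} (hh1 : ContDiffOn ℝ k h1 s)
    (hh2 : ContDiffOn ℝ k h2 s) (hφ : ContDiffOn ℝ k φ s) (hψ : ContDiffOn ℝ k ψ s)
    (hgap : ∀ y ∈ s, gap ε h1 h2 y ≠ 0) : ContDiffOn ℝ k (utilSlope ε h1 h2 φ ψ) s :=
  (hφ.sub hψ).div ((contDiffOn_const.add hh1).sub hh2) hgap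

/-- The gradient of `u` with the vertical derivative of `ũ` subtracted from its last component.
It has the same divergence as `∇u`, because `ũ` is affine in `x_n`, and differs from `∇(u - ũ)` by
the horizontal derivatives of `ũ` only. -/
def flux (ε : ℝ) (h1 h2 φ ψ : Ep n → ℝ) (u : Efull n → ℝ) (α : Fin n) (x : Efull n) : ℝ :=
  fderiv ℝ u x (dir n α) - (dir n α).2 * utilSlope ε h1 h2 φ ψ x.1

lemma contDiffOn_flux {U : Set (Efull n)} (hU : IsOpen U) {s : Set (Ep n)}
    (hUs : Set.MapsTo Prod.fst U s) (hu : ContDiffOn ℝ 2 u U)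
    (hslope : ContDiffOn ℝ 1 (utilSlope ε h1 h2 φ ψ) s) (α : Fin n) :
    ContDiffOn ℝ 1 (flux ε h1 h2 φ ψ u α) U :=
  ((hu.fderiv_of_isOpen hU (by norm_num)).clm_apply contDiffOn_const).sub
    (contDiffOn_const.mul (hslope.comp contDiffOn_fst hUs))

lemma sum_fderiv_flux (hu : ∀ α, DifferentiableAt ℝ (fun z => fderiv ℝ u z (dir n α)) x)
    (hslope : DifferentiableAt ℝ (utilSlope ε h1 h2 φ ψ) x.1) :
    ∑ α, fderiv ℝ (flux ε h1 h2 φ ψ u α) x (dir n α) = lapl n u x := by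
  refine Finset.sum_congr rfl fun α _ => ?_
  have hslope' := (hslope.hasFDerivAt.comp x hasFDerivAt_fst).const_mul (dir n α).2
  have hflux : HasFDerivAt (flux ε h1 h2 φ ψ u α) _ x := (hu α).hasFDerivAt.sub hslope'
  rw [hflux.fderiv]
  rcases dir_fst_eq_zero_or_snd_eq_zero α with hα | hα <;> simp [hα]

lemma flux_sub_fderiv_sub_util (hh1 : DifferentiableAt ℝ h1 x.1) (hh2 : DifferentiableAt ℝ h2 x.1)
    (hφ : DifferentiableAt ℝ φ x.1) (hψ : DifferentiableAt ℝ ψ x.1)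
    (hgap : gap ε h1 h2 x.1 ≠ 0) (hu : DifferentiableAt ℝ u x)
    (hutil : DifferentiableAt ℝ (util n ε h1 h2 φ ψ) x) (α : Fin n) :
    flux ε h1 h2 φ ψ u α x - fderiv ℝ (fun z => u z - util n ε h1 h2 φ ψ z) x (dir n α) =
      fderiv ℝ (util n ε h1 h2 φ ψ) x ((dir n α).1, 0) := by
  rw [fderiv_fun_sub hu hutil, sub_apply,
    fderiv_util_apply_eq_horizontal_add hh1 hh2 hφ hψ hgap (dir n α), flux]
  ring

end Flux

lemma exists_norm_fderiv_contDiffBump_le {E : Type*} [NormedAddCommGroup E] [NormedSpace ℝ E]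
    [FiniteDimensional ℝ E] [HasContDiffBump E] {c : E} (η : ContDiffBump c) :
    ∃ K, ∀ y, ‖fderiv ℝ η y‖ ≤ K :=
  (η.contDiff.continuous_fderiv one_ne_zero).bounded_above_of_compact_support
    (η.hasCompactSupport.fderiv (𝕜 := ℝ))

lemma integral_le_of_lintegral_ofReal_le {α : Type*} {m : MeasurableSpace α} {μ : Measure α}
    {f : α → ℝ} {c : ℝ} (hf : ∀ x, 0 ≤ f x) (hc : 0 ≤ c)
    (hle : ∫⁻ x, ENNReal.ofReal (f x) ∂μ ≤ ENNReal.ofReal c) : ∫ x, f x ∂μ ≤ c := by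
  refine (le_abs_self _).trans ((norm_integral_le_lintegral_norm f).trans ?_)
  simp only [Real.norm_of_nonneg (hf _)]
  exact ENNReal.toReal_le_of_le_ofReal hc hle

instance isAddHaarMeasure_volume_Efull (n : ℕ) : (volume : Measure (Efull n)).IsAddHaarMeasure :=
  inferInstanceAs ((volume : Measure (Ep n)).prod (volume : Measure ℝ)).IsAddHaarMeasure

section Energy

variable {n : ℕ} {ε κ C₀ : ℝ} {h1 h2 φ ψ : Ep n → ℝ} {u : Efull n → ℝ}

lemma exists_isCompact_superlevel_sub_util (hh1 : ContinuousOn h1 (closedBall 0 1))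
    (hh2 : ContinuousOn h2 (closedBall 0 1)) (hφ : ContinuousOn φ (closedBall 0 1))
    (hψ : ContinuousOn ψ (closedBall 0 1)) (hgap : ∀ y, ‖y‖ ≤ 1 → gap ε h1 h2 y ≠ 0)
    (hu : AttainsBV n ε h1 h2 u φ ψ) {R τ : ℝ} (hR : R < 1) (hτ : 0 < τ) :
    ∃ K, IsCompact K ∧ K ⊆ Omega n ε h1 h2 1 ∧ ∀ x ∈ Omega n ε h1 h2 1, x ∉ K →
      R < ‖x.1‖ ∨ |u x - util n ε h1 h2 φ ψ x| ≤ τ := by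
  have hball : closedBall (0 : Ep n) R ⊆ closedBall 0 1 := closedBall_subset_closedBall hR.le
  have hutil : ContinuousOn (util n ε h1 h2 φ ψ) (Prod.fst ⁻¹' closedBall 0 1) :=
    (contDiffOn_util (contDiffOn_zero.2 hh1) (contDiffOn_zero.2 hh2) (contDiffOn_zero.2 hφ)
      (contDiffOn_zero.2 hψ) fun y hy => hgap y (mem_closedBall_zero_iff.1 hy)).continuousOn
  have hcont : ContinuousOn (fun x => u x - util n ε h1 h2 φ ψ x) (closedRegion ε h1 h2 R) :=
    (hu.1.mono (closedRegion_subset_union hR)).sub (hutil.mono fun x hx => hball hx.1)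
  have hzero : ∀ x ∈ closedRegion ε h1 h2 R, x ∉ Omega n ε h1 h2 1 →
      u x - util n ε h1 h2 φ ψ x = 0 := by
    rintro ⟨y, t⟩ hx hxΩ
    rcases closedRegion_subset_union hR hx with (hxΩ' | ⟨hy, ht⟩) | ⟨hy, ht⟩
    · exact absurd hxΩ' hxΩ
    · obtain rfl : t = ε / 2 + h1 y := ht
      exact sub_eq_zero.2 ((hu.2 y hy).1.trans (util_top (hgap y hy)).symm)
    · obtain rfl : t = -ε / 2 + h2 y := ht
      exact sub_eq_zero.2 ((hu.2 y hy).2.trans (util_bottom y).symm)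
  obtain ⟨hcompact, hsub⟩ := isCompact_superlevel_subset
    (isCompact_closedRegion (hh1.mono hball) (hh2.mono hball)) hcont hzero hτ
  refine ⟨_, hcompact, hsub, fun x hx hxK => or_iff_not_imp_left.2 fun hxR => ?_⟩
  by_contra hlarge
  exact hxK ⟨⟨mem_closedBall_zero_iff.2 (not_lt.1 hxR), hx.2.1.le, hx.2.2.le⟩, (not_le.1 hlarge).le⟩

lemma lintegral_sq_norm_fderiv_le_cutoff_energy (hn : n ≠ 0) (η : ContDiffBump (0 : Ep n))
    (hη : η.rIn ≤ 1) (hh1 : ContinuousOn h1 (ball 0 η.rIn)) (hh2 : ContinuousOn h2 (ball 0 η.rIn))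
    (w : Efull n → ℝ) :
    ∫⁻ x in Omega n ε h1 h2 η.rIn, ENNReal.ofReal (‖fderiv ℝ w x‖ ^ 2) ≤
      ENNReal.ofReal 2 * ∫⁻ x in Omega n ε h1 h2 1,
        ENNReal.ofReal (∑ α, (η x.1 * fderiv ℝ w x (dir n α)) ^ 2) := by
  have hsub : Omega n ε h1 h2 η.rIn ⊆ Omega n ε h1 h2 1 := fun x hx => ⟨hx.1.trans_le hη, hx.2⟩
  rw [← lintegral_const_mul' _ _ ENNReal.ofReal_ne_top]
  refine (setLIntegral_mono' (isOpen_Omega hh1 hh2).measurableSet fun x hx => ?_).trans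
    (lintegral_mono_set hsub)
  rw [← ENNReal.ofReal_mul zero_le_two,
    η.one_of_mem_closedBall (mem_closedBall_zero_iff.2 hx.1.le)]
  simp only [one_mul]
  exact ENNReal.ofReal_le_ofReal (norm_sq_le_two_mul_sum_dir hn _)

/-- The geometric conditions on the narrow region that the energy estimate depends on: the graphs
are `C²`-bounded by `κ`, horizontal above the origin, and `|x'|² ≤ C₀ δ(x')`. -/
structure FlatGap (ε κ C₀ : ℝ) (h1 h2 : Ep n → ℝ) : Prop where
  eps_le_one : ε ≤ 1
  contDiffOn_top : ContDiffOn ℝ 2 h1 (closedBall 0 1)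
  contDiffOn_bottom : ContDiffOn ℝ 2 h2 (closedBall 0 1)
  fderiv_top : fderiv ℝ h1 0 = 0
  fderiv_bottom : fderiv ℝ h2 0 = 0
  C2norm_add_le : C2norm n h1 + C2norm n h2 ≤ κ
  gap_pos : ∀ y, ‖y‖ ≤ 1 → 0 < gap ε h1 h2 y
  sq_norm_le : ∀ y, ‖y‖ ≤ 1 → ‖y‖ ^ 2 ≤ C₀ * gap ε h1 h2 y

namespace FlatGap

lemma kappa_nonneg (hgeom : FlatGap ε κ C₀ h1 h2) : 0 ≤ κ :=
  (add_nonneg (C2norm_nonneg hgeom.contDiffOn_top)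
    (C2norm_nonneg hgeom.contDiffOn_bottom)).trans hgeom.C2norm_add_le

lemma const_nonneg (hgeom : FlatGap ε κ C₀ h1 h2) : 0 ≤ C₀ :=
  nonneg_of_mul_nonneg_left ((sq_nonneg _).trans (hgeom.sq_norm_le 0 (by simp)))
    (hgeom.gap_pos 0 (by simp))

lemma isOpen_Omega (hgeom : FlatGap ε κ C₀ h1 h2) : IsOpen (Omega n ε h1 h2 1) :=
  _root_.isOpen_Omega (hgeom.contDiffOn_top.continuousOn.mono ball_subset_closedBall)
    (hgeom.contDiffOn_bottom.continuousOn.mono ball_subset_closedBall)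

lemma contDiffOn_util (hgeom : FlatGap ε κ C₀ h1 h2) (hφ : ContDiffOn ℝ 2 φ (closedBall 0 1))
    (hψ : ContDiffOn ℝ 2 ψ (closedBall 0 1)) :
    ContDiffOn ℝ 2 (util n ε h1 h2 φ ψ) (Omega n ε h1 h2 1) :=
  (_root_.contDiffOn_util hgeom.contDiffOn_top hgeom.contDiffOn_bottom hφ hψ fun y hy =>
    (hgeom.gap_pos y (mem_closedBall_zero_iff.1 hy)).ne').mono
      fun _ hx => mem_closedBall_zero_iff.2 hx.1.le

lemma contDiffOn_utilSlope (hgeom : FlatGap ε κ C₀ h1 h2)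
    (hφ : ContDiffOn ℝ 2 φ (closedBall 0 1)) (hψ : ContDiffOn ℝ 2 ψ (closedBall 0 1)) :
    ContDiffOn ℝ 1 (utilSlope ε h1 h2 φ ψ) (ball 0 1) :=
  ((_root_.contDiffOn_utilSlope hgeom.contDiffOn_top hgeom.contDiffOn_bottom hφ hψ fun y hy =>
    (hgeom.gap_pos y (mem_closedBall_zero_iff.1 hy)).ne').mono
      ball_subset_closedBall).of_le one_le_two

lemma contDiffOn_flux (hgeom : FlatGap ε κ C₀ h1 h2) (hφ : ContDiffOn ℝ 2 φ (closedBall 0 1))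
    (hψ : ContDiffOn ℝ 2 ψ (closedBall 0 1)) (hu : ContDiffOn ℝ 2 u (Omega n ε h1 h2 1))
    (α : Fin n) : ContDiffOn ℝ 1 (flux ε h1 h2 φ ψ u α) (Omega n ε h1 h2 1) :=
  _root_.contDiffOn_flux hgeom.isOpen_Omega (fun _ hx => mem_ball_zero_iff.2 hx.1) hu
    (hgeom.contDiffOn_utilSlope hφ hψ) α

lemma sum_fderiv_flux (hgeom : FlatGap ε κ C₀ h1 h2) (hφ : ContDiffOn ℝ 2 φ (closedBall 0 1))
    (hψ : ContDiffOn ℝ 2 ψ (closedBall 0 1)) (hu : ContDiffOn ℝ 2 u (Omega n ε h1 h2 1))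
    {x : Efull n} (hx : x ∈ Omega n ε h1 h2 1) :
    ∑ α, fderiv ℝ (flux ε h1 h2 φ ψ u α) x (dir n α) = lapl n u x := by
  have hΩ := hgeom.isOpen_Omega
  have hgrad : ContDiffOn ℝ 1 (fderiv ℝ u) (Omega n ε h1 h2 1) :=
    hu.fderiv_of_isOpen hΩ (by norm_num)
  refine _root_.sum_fderiv_flux (fun α => ?_) ?_
  · exact ((hgrad.differentiableOn one_ne_zero).differentiableAt
      (hΩ.mem_nhds hx)).clm_apply (differentiableAt_const _)
  · exact ((hgeom.contDiffOn_utilSlope hφ hψ).differentiableOn one_ne_zero).differentiableAt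
      (isOpen_ball.mem_nhds (mem_ball_zero_iff.2 hx.1))

lemma flux_sub_fderiv_sub_util (hgeom : FlatGap ε κ C₀ h1 h2)
    (hφ : ContDiffOn ℝ 2 φ (closedBall 0 1)) (hψ : ContDiffOn ℝ 2 ψ (closedBall 0 1))
    (hu : ContDiffOn ℝ 2 u (Omega n ε h1 h2 1)) {x : Efull n} (hx : x ∈ Omega n ε h1 h2 1)
    (α : Fin n) :
    flux ε h1 h2 φ ψ u α x - fderiv ℝ (fun z => u z - util n ε h1 h2 φ ψ z) x (dir n α) =
      fderiv ℝ (util n ε h1 h2 φ ψ) x ((dir n α).1, 0) := by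
  have hΩ := hgeom.isOpen_Omega.mem_nhds hx
  have hdiff {f : Ep n → ℝ} (hf : ContDiffOn ℝ 2 f (closedBall 0 1)) : DifferentiableAt ℝ f x.1 :=
    differentiableAt_of_contDiffOn_closedBall hf hx.1
  exact _root_.flux_sub_fderiv_sub_util (hdiff hgeom.contDiffOn_top)
    (hdiff hgeom.contDiffOn_bottom) (hdiff hφ) (hdiff hψ) (hgeom.gap_pos x.1 hx.1.le).ne'
    ((hu.differentiableOn two_ne_zero).differentiableAt hΩ)
    (((hgeom.contDiffOn_util hφ hψ).differentiableOn two_ne_zero).differentiableAt hΩ) α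

lemma lintegral_cutoff_energy_le (hgeom : FlatGap ε κ C₀ h1 h2)
    (hφ : ContDiffOn ℝ 2 φ (closedBall 0 1)) (hψ : ContDiffOn ℝ 2 ψ (closedBall 0 1))
    (hu : ContDiffOn ℝ 2 u (Omega n ε h1 h2 1)) (hlapl : ∀ x ∈ Omega n ε h1 h2 1, lapl n u x = 0)
    (hbv : AttainsBV n ε h1 h2 u φ ψ) (η : ContDiffBump (0 : Ep n)) (hη : η.rOut < 1) :
    ∫⁻ x in Omega n ε h1 h2 1, ENNReal.ofReal (∑ α,
        (η x.1 * fderiv ℝ (fun z => u z - util n ε h1 h2 φ ψ z) x (dir n α)) ^ 2) ≤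
      ∫⁻ x in Omega n ε h1 h2 1, ENNReal.ofReal (∑ α,
        (4 * (η x.1 * fderiv ℝ (util n ε h1 h2 φ ψ) x ((dir n α).1, 0)) ^ 2 +
          10 * (fderiv ℝ η x.1 (dir n α).1 * (u x - util n ε h1 h2 φ ψ x)) ^ 2)) := by
  have hvanish : ∀ τ > 0, ∃ K, IsCompact K ∧ K ⊆ Omega n ε h1 h2 1 ∧ ∀ x ∈ Omega n ε h1 h2 1,
      x ∉ K → η x.1 = 0 ∨ |u x - util n ε h1 h2 φ ψ x| ≤ τ := fun τ hτ => by
    obtain ⟨K, hK, hKΩ, hsmall⟩ := exists_isCompact_superlevel_sub_util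
      hgeom.contDiffOn_top.continuousOn hgeom.contDiffOn_bottom.continuousOn hφ.continuousOn
      hψ.continuousOn (fun y hy => (hgeom.gap_pos y hy).ne') hbv hη hτ
    refine ⟨K, hK, hKΩ, fun x hx hxK => (hsmall x hx hxK).imp_left fun hout => ?_⟩
    exact η.zero_of_le_dist (by simpa using hout.le)
  have hχ : ContDiff ℝ 1 (fun x : Efull n => η x.1) := η.contDiff.comp contDiff_fst
  have hχ' : ∀ (x : Efull n) v, fderiv ℝ (fun z : Efull n => η z.1) x v = fderiv ℝ η x.1 v.1 :=
    fun x v => by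
      rw [fderiv_fun_comp x (η.contDiff.differentiable one_ne_zero x.1) differentiableAt_fst,
        fderiv_fst]
      rfl
  refine (lintegral_energy_le_of_divergence_eq_zero hgeom.isOpen_Omega
    (hgeom.contDiffOn_flux hφ hψ hu)
    (fun x hx => (hgeom.sum_fderiv_flux hφ hψ hu hx).trans (hlapl x hx))
    ((hu.sub (hgeom.contDiffOn_util hφ hψ)).of_le one_le_two) hχ.contDiffOn hvanish).trans_eq
    (setLIntegral_congr_fun hgeom.isOpen_Omega.measurableSet fun x hx => ?_)
  simp only [hχ', hgeom.flux_sub_fderiv_sub_util hφ hψ hu hx]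

lemma sum_cutoff_error_le (hgeom : FlatGap ε κ C₀ h1 h2) (hφ : ContDiffOn ℝ 2 φ (closedBall 0 1))
    (hψ : ContDiffOn ℝ 2 ψ (closedBall 0 1)) (η : ContDiffBump (0 : Ep n)) {K : ℝ}
    (hK : ∀ y, ‖fderiv ℝ η y‖ ≤ K) {x : Efull n} (hx : x ∈ Omega n ε h1 h2 1) (w : ℝ) :
    ∑ α, (4 * (η x.1 * fderiv ℝ (util n ε h1 h2 φ ψ) x ((dir n α).1, 0)) ^ 2 +
        10 * (fderiv ℝ η x.1 (dir n α).1 * w) ^ 2) ≤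
      n * (8 * (1 + κ + κ ^ 2 * C₀) * (C2norm n φ + C2norm n ψ) ^ 2) * (gap ε h1 h2 x.1)⁻¹ +
        n * (10 * K ^ 2) * w ^ 2 := by
  have hterm : ∀ α, 4 * (η x.1 * fderiv ℝ (util n ε h1 h2 φ ψ) x ((dir n α).1, 0)) ^ 2 +
      10 * (fderiv ℝ η x.1 (dir n α).1 * w) ^ 2 ≤
        4 * (2 * (1 + κ + κ ^ 2 * C₀) * (C2norm n φ + C2norm n ψ) ^ 2 / gap ε h1 h2 x.1) +
          10 * (K ^ 2 * w ^ 2) := fun α => by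
    have hη : η x.1 ^ 2 ≤ 1 := pow_le_one₀ η.nonneg η.le_one
    have hderiv : |fderiv ℝ η x.1 (dir n α).1| ≤ K :=
      ((fderiv ℝ η x.1).le_of_opNorm_le_of_le (hK x.1) (norm_dir_fst_le_one α)).trans_eq (mul_one K)
    have hderiv_sq : fderiv ℝ η x.1 (dir n α).1 ^ 2 ≤ K ^ 2 :=
      sq_le_sq' (abs_le.1 hderiv).1 (abs_le.1 hderiv).2
    have hutil := fderiv_util_horizontal_sq_le hgeom.eps_le_one hgeom.contDiffOn_top
      hgeom.contDiffOn_bottom hgeom.fderiv_top hgeom.fderiv_bottom hgeom.C2norm_add_le hφ hψ hx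
      (hgeom.sq_norm_le x.1 hx.1.le) (norm_dir_fst_le_one α)
    rw [mul_pow, mul_pow]
    gcongr
    exact (mul_le_of_le_one_left (sq_nonneg _) hη).trans hutil
  refine (Finset.sum_le_sum fun α _ => hterm α).trans_eq ?_
  rw [Finset.sum_const, Finset.card_univ, Fintype.card_fin, nsmul_eq_mul]
  ring

lemma integrableOn_sq_sub_util (hgeom : FlatGap ε κ C₀ h1 h2)
    (hφ : ContDiffOn ℝ 2 φ (closedBall 0 1)) (hψ : ContDiffOn ℝ 2 ψ (closedBall 0 1))
    (hu : ContinuousOn u (Omega n ε h1 h2 1))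
    (hint : IntegrableOn (fun x => u x ^ 2) (Omega n ε h1 h2 1)) :
    IntegrableOn (fun x => (u x - util n ε h1 h2 φ ψ x) ^ 2) (Omega n ε h1 h2 1) := by
  have hmeas := hgeom.isOpen_Omega.measurableSet
  have hfinite : volume (Omega n ε h1 h2 1) ≠ ⊤ :=
    (volume_Omega_lt_top hgeom.contDiffOn_top.continuousOn
      hgeom.contDiffOn_bottom.continuousOn).ne
  refine ((hint.add (integrableOn_const hfinite
    (C := (C2norm n φ + C2norm n ψ) ^ 2))).const_mul 2).mono'
    (((hu.sub (hgeom.contDiffOn_util hφ hψ).continuousOn).pow 2).aestronglyMeasurable hmeas) ?_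
  refine ae_restrict_of_forall_mem hmeas fun x hx => ?_
  have hutil : |util n ε h1 h2 φ ψ x| ≤ C2norm n φ + C2norm n ψ := (abs_util_le hx).trans
    (add_le_add (norm_le_C2norm hφ hx.1.le) (norm_le_C2norm hψ hx.1.le))
  calc ‖(u x - util n ε h1 h2 φ ψ x) ^ 2‖ = (u x + -util n ε h1 h2 φ ψ x) ^ 2 := by
        rw [Real.norm_of_nonneg (sq_nonneg _), sub_eq_add_neg]
    _ ≤ 2 * (u x ^ 2 + (-util n ε h1 h2 φ ψ x) ^ 2) := add_sq_le
    _ ≤ 2 * (u x ^ 2 + (C2norm n φ + C2norm n ψ) ^ 2) := by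
        rw [neg_sq]
        gcongr 2 * (_ + ?_)
        exact sq_le_sq' (abs_le.1 hutil).1 (abs_le.1 hutil).2

lemma lintegral_sum_cutoff_error_le (hgeom : FlatGap ε κ C₀ h1 h2)
    (hφ : ContDiffOn ℝ 2 φ (closedBall 0 1)) (hψ : ContDiffOn ℝ 2 ψ (closedBall 0 1))
    (η : ContDiffBump (0 : Ep n)) {K : ℝ} (hK : ∀ y, ‖fderiv ℝ η y‖ ≤ K) {w : Efull n → ℝ}
    (hw : IntegrableOn (fun x => w x ^ 2) (Omega n ε h1 h2 1)) :
    ∫⁻ x in Omega n ε h1 h2 1, ENNReal.ofReal (∑ α,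
        (4 * (η x.1 * fderiv ℝ (util n ε h1 h2 φ ψ) x ((dir n α).1, 0)) ^ 2 +
          10 * (fderiv ℝ η x.1 (dir n α).1 * w x) ^ 2)) ≤
      ENNReal.ofReal (n * (8 * (1 + κ + κ ^ 2 * C₀) * (C2norm n φ + C2norm n ψ) ^ 2) *
          volume.real (ball (0 : Ep n) 1) +
        n * (10 * K ^ 2) * ∫ x in Omega n ε h1 h2 1, w x ^ 2) := by
  have hmeas := hgeom.isOpen_Omega.measurableSet
  have hκ := hgeom.kappa_nonneg
  have hC₀ := hgeom.const_nonneg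
  have hsq : ∫⁻ x in Omega n ε h1 h2 1, ENNReal.ofReal (w x ^ 2) =
      ENNReal.ofReal (∫ x in Omega n ε h1 h2 1, w x ^ 2) :=
    (ofReal_integral_eq_lintegral_ofReal hw (.of_forall fun x => sq_nonneg (w x))).symm
  have hinv : ∫⁻ x in Omega n ε h1 h2 1, ENNReal.ofReal (gap ε h1 h2 x.1)⁻¹ =
      ENNReal.ofReal (volume.real (ball (0 : Ep n) 1)) := by
    rw [lintegral_inv_gap (hgeom.contDiffOn_top.continuousOn.mono ball_subset_closedBall)
      (hgeom.contDiffOn_bottom.continuousOn.mono ball_subset_closedBall)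
      fun y hy => hgeom.gap_pos y (mem_ball_zero_iff.1 hy).le, ofReal_measureReal]
  have hwmeas : AEMeasurable (fun x => ENNReal.ofReal (w x ^ 2))
      (volume.restrict (Omega n ε h1 h2 1)) := hw.aestronglyMeasurable.aemeasurable.ennreal_ofReal
  set a : ℝ := n * (8 * (1 + κ + κ ^ 2 * C₀) * (C2norm n φ + C2norm n ψ) ^ 2)
  set b : ℝ := n * (10 * K ^ 2)
  have ha : 0 ≤ a := by positivity
  have hb : 0 ≤ b := by positivity
  calc _ ≤ ∫⁻ x in Omega n ε h1 h2 1, (ENNReal.ofReal a * ENNReal.ofReal (gap ε h1 h2 x.1)⁻¹ +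
        ENNReal.ofReal b * ENNReal.ofReal (w x ^ 2)) := by
        refine setLIntegral_mono' hmeas fun x hx => ?_
        rw [← ENNReal.ofReal_mul ha, ← ENNReal.ofReal_mul hb]
        exact (ENNReal.ofReal_le_ofReal (hgeom.sum_cutoff_error_le hφ hψ η hK hx (w x))).trans
          ENNReal.ofReal_add_le
    _ = _ := by
        rw [lintegral_add_right' _ (hwmeas.const_mul _),
          lintegral_const_mul' _ _ ENNReal.ofReal_ne_top,
          lintegral_const_mul' _ _ ENNReal.ofReal_ne_top, hsq, hinv,
          ← ENNReal.ofReal_mul ha, ← ENNReal.ofReal_mul hb, ← ENNReal.ofReal_add]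
        · positivity
        · exact mul_nonneg hb (integral_nonneg fun x => sq_nonneg (w x))

lemma integral_sq_norm_fderiv_sub_util_le (hgeom : FlatGap ε κ C₀ h1 h2) (hn : n ≠ 0)
    (hφ : ContDiffOn ℝ 2 φ (closedBall 0 1)) (hψ : ContDiffOn ℝ 2 ψ (closedBall 0 1))
    (hu : ContDiffOn ℝ 2 u (Omega n ε h1 h2 1)) (hlapl : ∀ x ∈ Omega n ε h1 h2 1, lapl n u x = 0)
    (hint : IntegrableOn (fun x => ‖u x‖ ^ 2) (Omega n ε h1 h2 1))
    (hbv : AttainsBV n ε h1 h2 u φ ψ) (η : ContDiffBump (0 : Ep n)) (hη : η.rOut < 1) {K : ℝ}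
    (hK : ∀ y, ‖fderiv ℝ η y‖ ≤ K) :
    ∫ x in Omega n ε h1 h2 η.rIn, ‖fderiv ℝ (fun z => u z - util n ε h1 h2 φ ψ z) x‖ ^ 2 ≤
      2 * (n * (8 * (1 + κ + κ ^ 2 * C₀) * (C2norm n φ + C2norm n ψ) ^ 2) *
          volume.real (ball (0 : Ep n) 1) +
        n * (10 * K ^ 2) * ∫ x in Omega n ε h1 h2 1, ‖u x - util n ε h1 h2 φ ψ x‖ ^ 2) := by
  have hκ := hgeom.kappa_nonneg
  have hC₀ := hgeom.const_nonneg
  have hrIn : η.rIn ≤ 1 := η.rIn_lt_rOut.le.trans hη.le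
  have hball : ball (0 : Ep n) η.rIn ⊆ closedBall 0 1 :=
    ball_subset_closedBall.trans (closedBall_subset_closedBall hrIn)
  simp only [Real.norm_eq_abs, sq_abs] at hint ⊢
  refine integral_le_of_lintegral_ofReal_le (fun x => by positivity) (by positivity) ?_
  rw [ENNReal.ofReal_mul zero_le_two]
  refine (lintegral_sq_norm_fderiv_le_cutoff_energy hn η hrIn
    (hgeom.contDiffOn_top.continuousOn.mono hball)
    (hgeom.contDiffOn_bottom.continuousOn.mono hball) _).trans ?_
  gcongr
  exact (hgeom.lintegral_cutoff_energy_le hφ hψ hu hlapl hbv η hη).trans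
    (hgeom.lintegral_sum_cutoff_error_le hφ hψ η hK
      (hgeom.integrableOn_sq_sub_util hφ hψ hu.continuousOn hint))

lemma of_HGeom {κ0 : ℝ} (hε : ε ∈ Set.Ioo (0 : ℝ) 1) (hC₀ : 0 < C₀)
    (hgeom : HGeom n ε κ0 κ h1 h2) (hδ : DeltaComp n ε C₀ h1 h2) : FlatGap ε κ C₀ h1 h2 := by
  obtain ⟨hh1, hh2, hsep, -, -, hh1', hh2', -, hκ⟩ := hgeom
  refine ⟨hε.2.le, hh1, hh2, hh1', hh2', hκ, fun y hy => ?_, fun y hy => ?_⟩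
  · unfold gap
    linarith [hsep y hy]
  · have hcomp : ε + ‖y‖ ^ 2 ≤ C₀ * gap ε h1 h2 y := (div_le_iff₀' hC₀).1 (hδ y hy).1
    linarith [hε.1]

end FlatGap

end Energy

theorem stmt13_general (n : ℕ) (hn : n ≠ 0) (κ C₀ : ℝ) :
    ∃ C : ℝ, 0 < C ∧ ∀ (ε : ℝ) (h1 h2 : Ep n → ℝ), FlatGap ε κ C₀ h1 h2 →
    ∀ (u : Efull n → ℝ) (φ ψ : Ep n → ℝ),
      ContDiffOn ℝ 2 φ (closedBall 0 1) → ContDiffOn ℝ 2 ψ (closedBall 0 1) →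
      ContDiffOn ℝ 2 u (Omega n ε h1 h2 1) → (∀ x ∈ Omega n ε h1 h2 1, lapl n u x = 0) →
      IntegrableOn (fun x => ‖u x‖ ^ 2) (Omega n ε h1 h2 1) → AttainsBV n ε h1 h2 u φ ψ →
      (∫ x in Omega n ε h1 h2 (1/2),
          ‖fderiv ℝ (fun z => u z - util n ε h1 h2 φ ψ z) x‖^2) ≤
        C * ((∫ x in Omega n ε h1 h2 1, ‖u x - util n ε h1 h2 φ ψ x‖^2) +
          (C2norm n φ)^2 + (C2norm n ψ)^2) := by
  let η : ContDiffBump (0 : Ep n) := ⟨1 / 2, 3 / 4, by norm_num, by norm_num⟩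
  obtain ⟨K, hK⟩ := exists_norm_fderiv_contDiffBump_le η
  set a : ℝ := 16 * n * (1 + κ + κ ^ 2 * C₀) * volume.real (ball (0 : Ep n) 1)
  set b : ℝ := 20 * n * K ^ 2
  refine ⟨max 1 (max (2 * a) b), by positivity, ?_⟩
  intro ε h1 h2 hgeom u φ ψ hφ hψ hu hlapl hint hbv
  have hκ := hgeom.kappa_nonneg
  have hC₀ := hgeom.const_nonneg
  set W : ℝ := ∫ x in Omega n ε h1 h2 1, ‖u x - util n ε h1 h2 φ ψ x‖ ^ 2
  calc _ ≤ a * (C2norm n φ + C2norm n ψ) ^ 2 + b * W :=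
        (hgeom.integral_sq_norm_fderiv_sub_util_le hn hφ hψ hu hlapl hint hbv η
          (by norm_num [η]) hK).trans_eq (by ring)
    _ ≤ a * (2 * (C2norm n φ ^ 2 + C2norm n ψ ^ 2)) + b * W := by
        gcongr
        exact add_sq_le
    _ = (2 * a) * (C2norm n φ ^ 2 + C2norm n ψ ^ 2) + b * W := by ring
    _ ≤ max 1 (max (2 * a) b) * (C2norm n φ ^ 2 + C2norm n ψ ^ 2) + max 1 (max (2 * a) b) * W := by
        gcongr <;> simp
    _ = max 1 (max (2 * a) b) * (W + C2norm n φ ^ 2 + C2norm n ψ ^ 2) := by ring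

theorem stmt13 (n : ℕ) (hn : 2 ≤ n) (κ0 κ1 C₀ : ℝ)
    (hκ0 : 0 < κ0) (hκ1 : 0 < κ1) (hC₀ : 1 ≤ C₀) :
    ∃ C : ℝ, 0 < C ∧
    ∀ ε ∈ Set.Ioo (0:ℝ) 1, ∀ h1 h2 : Ep n → ℝ,
      HGeom n ε κ0 κ1 h1 h2 → DeltaComp n ε C₀ h1 h2 →
    ∀ (u : Efull n → ℝ) (φ ψ : Ep n → ℝ),
      ContDiffOn ℝ 2 φ (closedBall 0 1) → ContDiffOn ℝ 2 ψ (closedBall 0 1) →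
      HarmBV n ε h1 h2 u φ ψ →
      (∫ x in Omega n ε h1 h2 (1/2),
          ‖fderiv ℝ (fun z => u z - util n ε h1 h2 φ ψ z) x‖^2) ≤
        C * ((∫ x in Omega n ε h1 h2 1, ‖u x - util n ε h1 h2 φ ψ x‖^2) +
          (C2norm n φ)^2 + (C2norm n ψ)^2) := by
  obtain ⟨C, hC, hestimate⟩ := stmt13_general n (by lia) κ1 C₀
  refine ⟨C, hC, fun ε hε h1 h2 hgeom hδ u φ ψ hφ hψ hharm => ?_⟩
  obtain ⟨hu, hlapl, hint, hbv⟩ := hharm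
  have hflat := FlatGap.of_HGeom hε (by linarith) hgeom hδ
  refine hestimate ε h1 h2 hflat u φ ψ hφ hψ hu hlapl (hint.mono' ?_ ?_) hbv
  · exact (hu.continuousOn.norm.pow 2).aestronglyMeasurable hflat.isOpen_Omega.measurableSet
  · exact .of_forall fun x => by simp
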